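/- Let N ≥ 3 be odd. Let u₀, u₁ ∈ C_c^∞(ℝ^N) and let u : ℝ × ℝ^N → ℝ be a smooth solution of the linear wave equation ∂_t²u = Δ_x u with u(0,·) = u₀ and ∂_t u(0,·) = u₁. Define the exterior energy Ext(t) = (1/2)∫_{|x| ≥ |t|} (|∇_x u(t,x)|² + (∂_t u(t,x))²) dx. Then there exist real numbers E₊ and E₋ such that Ext(t) → E₊ as t → +∞, Ext(t) → E₋ as t → −∞, and E₊ + E₋ = (1/2)∫_{ℝ^N}|∇u₀|² dx + (1/2)∫_{ℝ^N}u₁² dx. -/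

import Mathlib

open MeasureTheory Metric Filter Set

noncomputable section

/-- The ground state `W(x) = (1 + |x|²/(N(N-2)))^(-(N-2)/2)`. -/
def W (N : ℕ) (x : EuclideanSpace ℝ (Fin N)) : ℝ :=
  (1 + ‖x‖ ^ 2 / ((N : ℝ) * ((N : ℝ) - 2))) ^ (-(((N : ℝ) - 2) / 2))

/-- The energy `E(v₀,v₁)`. -/
def energy (N : ℕ) (v₀ v₁ : EuclideanSpace ℝ (Fin N) → ℝ) : ℝ :=
  (1 / 2) * (∫ x, v₁ x ^ 2)
    + (1 / 2) * (∫ x, ‖gradient v₀ x‖ ^ 2)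
    - ((N : ℝ) - 2) / (2 * (N : ℝ)) * (∫ x, |v₀ x| ^ (2 * (N : ℝ) / ((N : ℝ) - 2)))

/-- The first coordinate of a point of `ℝ^N`. -/
def firstCoord {N : ℕ} (x : EuclideanSpace ℝ (Fin N)) : ℝ :=
  if h : 0 < N then x ⟨0, h⟩ else 0

/-- The Lorentz-transformed ground state `W_ℓ(t,x)`; the sum `x₂² + ⋯ + x_N²` is written
as `‖x‖² - x₁²`. -/
def Wl (N : ℕ) (ℓ : ℝ) (t : ℝ) (x : EuclideanSpace ℝ (Fin N)) : ℝ :=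
  (1 + (firstCoord x - t * ℓ) ^ 2 / ((N : ℝ) * ((N : ℝ) - 2) * (1 - ℓ ^ 2))
     + (‖x‖ ^ 2 - firstCoord x ^ 2) / ((N : ℝ) * ((N : ℝ) - 2))) ^ (-(((N : ℝ) - 2) / 2))

/-- The time derivative `∂ₜ W_ℓ(t,x)`. -/
def dtWl (N : ℕ) (ℓ : ℝ) (t : ℝ) (x : EuclideanSpace ℝ (Fin N)) : ℝ :=
  deriv (fun s => Wl N ℓ s x) t

/-- The second partial derivative `∂²f/∂xⱼ²` at `x`. -/
def d2 {N : ℕ} (f : EuclideanSpace ℝ (Fin N) → ℝ) (j : Fin N)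
    (x : EuclideanSpace ℝ (Fin N)) : ℝ :=
  fderiv ℝ (fun y => fderiv ℝ f y (EuclideanSpace.single j 1)) x (EuclideanSpace.single j 1)

/-!
In odd dimension `N = 2n + 1` the imaginary part of `(‖x‖² - (t - ib)²)⁻ⁿ` is a global smooth
solution of the wave equation whose time derivative at `t = 0` is, up to a constant factor, the
Poisson kernel of width `b`. Convolving it and its time derivative with the data therefore gives
explicit solutions `V` with Poisson-regularised data. Along each ray `x = (w + s) θ` the rescaled
gradient `(w + s)ⁿ ∇V(w, (w + s) θ)` has one and the same limit, the radiation field `L(θ, s)`, for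
`w → +∞` and for `w → -∞`: this is where oddness of `N` enters, since `n` has to be an integer for
the homogeneous leading term to have no sign ambiguity. The exterior region `|x| ≥ |w|` corresponds
to `s ≥ 0` when `w > 0` and to `s ≤ 0` when `w < 0`, so the two limits of the exterior energy are
the integrals of `‖L‖²` over complementary half-spaces, and their sum is the conserved total energy.
As `b → 0` the regularised solutions converge to `u` in the energy norm, uniformly in time by
energy conservation for the difference, and so the limits pass to `u`.
-/

section WaveExteriorEnergy

open scoped Topology ContDiff

section Calculus

variable {V E F : Type*} [NormedAddCommGroup V] [NormedSpace ℝ V]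
  [NormedAddCommGroup E] [NormedSpace ℝ E] [NormedAddCommGroup F] [NormedSpace ℝ F]

lemma contDiff_fderiv_apply {U : V → F} (hU : ContDiff ℝ ∞ U) (v : V) :
    ContDiff ℝ ∞ fun p => fderiv ℝ U p v :=
  (hU.fderiv_right (m := ∞) (by norm_cast)).clm_apply contDiff_const

lemma fderiv_fderiv_apply_comm {U : V → F} (hU : ContDiff ℝ ∞ U) (v w p : V) :
    fderiv ℝ (fun q => fderiv ℝ U q v) p w = fderiv ℝ (fun q => fderiv ℝ U q w) p v := by
  have hd : DifferentiableAt ℝ (fderiv ℝ U) p :=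
    (hU.fderiv_right (m := ∞) (by norm_cast)).differentiable (by simp) p
  have second_fderiv (v w : V) :
      fderiv ℝ (fun q => fderiv ℝ U q v) p w = fderiv ℝ (fderiv ℝ U) p w v := by
    simp [fderiv_clm_apply hd (differentiableAt_const v)]
  have symm : IsSymmSndFDerivAt ℝ U p := hU.contDiffAt.isSymmSndFDerivAt (by
    rw [minSmoothness_of_isRCLikeNormedField]
    exact WithTop.coe_le_coe.2 le_top)
  rw [second_fderiv, second_fderiv, symm w v]

lemma hasFDerivAt_setIntegral_of_isCompact [ProperSpace V] {X : Type*} [TopologicalSpace X]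
    [T2Space X] [MeasurableSpace X] [OpensMeasurableSpace X] {μ : Measure X}
    [IsFiniteMeasureOnCompacts μ]
    {f : V → X → F} {f' : V → X → V →L[ℝ] F} {K : Set X} (hK : IsCompact K)
    (hf : Continuous (Function.uncurry f)) (hf' : Continuous (Function.uncurry f'))
    (h : ∀ p y, HasFDerivAt (fun q => f q y) (f' p y) p) (p₀ : V) :
    HasFDerivAt (fun p => ∫ y in K, f p y ∂μ) (∫ y in K, f' p₀ y ∂μ) p₀ := by
  obtain ⟨C, hC⟩ := ((isCompact_closedBall p₀ 1).prod hK).exists_bound_of_continuousOn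
    hf'.continuousOn
  have hf_slice (p : V) : Continuous (f p) := hf.comp (Continuous.prodMk_right p)
  have hf'_slice (p : V) : Continuous (f' p) := hf'.comp (Continuous.prodMk_right p)
  have : IsFiniteMeasure (μ.restrict K) := ⟨by simpa using hK.measure_lt_top⟩
  refine hasFDerivAt_integral_of_dominated_of_fderiv_le (bound := fun _ => C)
    (closedBall_mem_nhds p₀ one_pos) (.of_forall fun p => ?_)
    ((hf_slice p₀).continuousOn.integrableOn_compact hK) ?_ ?_ (integrable_const C)
    (.of_forall fun y p _ => h p y)
  · exact (hf_slice p).continuousOn.aestronglyMeasurable_of_isCompact hK hK.measurableSet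
  · exact (hf'_slice p₀).continuousOn.aestronglyMeasurable_of_isCompact hK hK.measurableSet
  · filter_upwards [ae_restrict_mem hK.measurableSet] with y hy p hp
    exact hC (p, y) ⟨hp, hy⟩

lemma fderiv_slice_right {G : ℝ × E → F} {t : ℝ} {x : E} (hG : DifferentiableAt ℝ G (t, x))
    (v : E) : fderiv ℝ (fun y => G (t, y)) x v = fderiv ℝ G (t, x) (0, v) := by
  have := hG.hasFDerivAt.comp x (hasFDerivAt_prodMk_right t x)
  simpa [Function.comp_def] using congrArg (· v) this.fderiv

lemma hasDerivAt_slice_left {G : ℝ × E → F} {t : ℝ} {x : E} (hG : DifferentiableAt ℝ G (t, x)) :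
    HasDerivAt (fun s => G (s, x)) (fderiv ℝ G (t, x) (1, 0)) t := by
  simpa [Function.comp_def] using
    (hG.hasFDerivAt.comp t (hasFDerivAt_prodMk_left t x)).hasDerivAt

variable [MeasurableSpace E] [BorelSpace E] {μ : Measure E}

lemma hasDerivAt_integral_slice [IsFiniteMeasureOnCompacts μ] [CompleteSpace F] {G : ℝ × E → F}
    (hG : ContDiff ℝ 1 G) {K : Set E} (hK : IsCompact K) {t : ℝ}
    (hGK : ∀ᶠ s in 𝓝 t, ∀ x ∉ K, G (s, x) = 0) :
    HasDerivAt (fun s => ∫ x, G (s, x) ∂μ) (∫ x, fderiv ℝ G (t, x) (1, 0) ∂μ) t := by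
  have hGd : Differentiable ℝ G := hG.differentiable (by simp)
  have hG' : Continuous (fderiv ℝ G) := hG.continuous_fderiv (by simp)
  have hder_slice (s : ℝ) (x : E) : HasFDerivAt (fun r => G (r, x))
      ((fderiv ℝ G (s, x)).comp (ContinuousLinearMap.inl ℝ ℝ E)) s :=
    (hGd (s, x)).hasFDerivAt.comp s (hasFDerivAt_prodMk_left s x)
  have hcont : Continuous fun p : ℝ × E =>
      (fderiv ℝ G p).comp (ContinuousLinearMap.inl ℝ ℝ E) := hG'.clm_comp continuous_const
  have hder := (hasFDerivAt_setIntegral_of_isCompact (μ := μ) hK (f := fun s x => G (s, x))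
    (f' := fun s x => (fderiv ℝ G (s, x)).comp (ContinuousLinearMap.inl ℝ ℝ E))
    hG.continuous hcont hder_slice t).hasDerivAt
  have hint : IntegrableOn
      (fun x => (fderiv ℝ G (t, x)).comp (ContinuousLinearMap.inl ℝ ℝ E)) K μ :=
    (hcont.comp (Continuous.prodMk_right t)).continuousOn.integrableOn_compact hK
  rw [ContinuousLinearMap.integral_apply hint] at hder
  have hG'K (x : E) (hx : x ∉ K) : fderiv ℝ G (t, x) (1, 0) = 0 := by
    have hzero : (fun s => G (s, x)) =ᶠ[𝓝 t] fun _ => 0 := hGK.mono fun s hs => hs x hx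
    rw [← (hasDerivAt_slice_left (hGd (t, x))).deriv, hzero.deriv_eq, deriv_const]
  rw [← setIntegral_eq_integral_of_forall_compl_eq_zero hG'K]
  refine HasDerivAt.congr_of_eventuallyEq (by simpa using hder)
    (hGK.mono fun s hs => (setIntegral_eq_integral_of_forall_compl_eq_zero hs).symm)

lemma integral_fderiv_apply_eq_zero [FiniteDimensional ℝ E] [μ.IsAddHaarMeasure] {f : E → F}
    (hf : ContDiff ℝ 1 f) (hfs : HasCompactSupport f) (v : E) : ∫ x, fderiv ℝ f x v ∂μ = 0 := by
  have hint : Integrable (fun x => fderiv ℝ f x v) μ :=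
    ((hf.continuous_fderiv (by simp)).clm_apply continuous_const).integrable_of_hasCompactSupport
      (hfs.fderiv_apply ℝ v)
  simpa using integral_smul_fderiv_eq_neg_fderiv_smul_of_integrable (μ := μ)
    (f := fun _ : E => (1 : ℝ)) (g := f) (v := v) (by simp) (by simpa using hint)
    (by simpa using hf.continuous.integrable_of_hasCompactSupport hfs)
    (fun x _ => differentiableAt_const _) (fun x _ => hf.differentiable (by simp) x)

end Calculus

section WaveEquation

/-- The space-time `ℝ × ℝ^ι`, with points `(t, x)`. -/
abbrev Spacetime (ι : Type*) : Type _ := ℝ × EuclideanSpace ℝ ι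

variable {ι F G : Type*} [Fintype ι] [NormedAddCommGroup F] [NormedSpace ℝ F]
  [NormedAddCommGroup G] [NormedSpace ℝ G]

/-- The time reflection `(t, x) ↦ (-t, x)`. -/
def timeReversal (ι : Type*) [Fintype ι] : Spacetime ι →L[ℝ] Spacetime ι :=
  (-ContinuousLinearMap.fst ℝ ℝ (EuclideanSpace ℝ ι)).prod (ContinuousLinearMap.snd ℝ ℝ _)

lemma timeReversal_apply (p : Spacetime ι) : timeReversal ι p = (-p.1, p.2) := rfl

variable [DecidableEq ι]

/-- The coordinate directions of space-time: `none` stands for time, `some j` for the `j`-th space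
direction. -/
def coordDir : Option ι → Spacetime ι
  | none => (1, 0)
  | some j => (0, EuclideanSpace.single j 1)

/-- The partial derivative `∂_μ U`, where `∂_none` is the time derivative. -/
def partialDeriv (μ : Option ι) (U : Spacetime ι → F) (p : Spacetime ι) : F :=
  fderiv ℝ U p (coordDir μ)

/-- The space-time gradient `(∂_t U, ∇_x U)`, whose squared Euclidean norm is twice the energy
density of `U`. -/
def spacetimeGradient (U : Spacetime ι → ℝ) (p : Spacetime ι) : EuclideanSpace ℝ (Option ι) :=
  WithLp.toLp 2 fun μ => partialDeriv μ U p

/-- Smooth solutions of the wave equation `∂_t² U = Δ_x U` on the whole of space-time. -/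
structure IsWaveSolution (U : Spacetime ι → F) : Prop where
  contDiff : ContDiff ℝ ∞ U
  wave_eq : ∀ p, partialDeriv none (partialDeriv none U) p =
    ∑ j, partialDeriv (some j) (partialDeriv (some j) U) p

lemma contDiff_partialDeriv {U : Spacetime ι → F} (hU : ContDiff ℝ ∞ U) (μ : Option ι) :
    ContDiff ℝ ∞ (partialDeriv μ U) :=
  contDiff_fderiv_apply hU _

lemma partialDeriv_comm {U : Spacetime ι → F} (hU : ContDiff ℝ ∞ U) (μ ν : Option ι) :
    partialDeriv μ (partialDeriv ν U) = partialDeriv ν (partialDeriv μ U) :=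
  funext fun p => fderiv_fderiv_apply_comm hU (coordDir ν) (coordDir μ) p

lemma partialDeriv_add {U V : Spacetime ι → F} (hU : ContDiff ℝ ∞ U) (hV : ContDiff ℝ ∞ V)
    (μ : Option ι) : partialDeriv μ (U + V) = partialDeriv μ U + partialDeriv μ V := by
  ext p
  simp [partialDeriv, fderiv_add (hU.differentiable (by simp) p) (hV.differentiable (by simp) p)]

lemma partialDeriv_clm_comp (L : F →L[ℝ] G) {U : Spacetime ι → F} (hU : ContDiff ℝ ∞ U)
    (μ : Option ι) : partialDeriv μ (L ∘ U) = L ∘ partialDeriv μ U := by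
  ext p
  simp [partialDeriv,
    (L.hasFDerivAt.comp p (hU.differentiable (by simp) p).hasFDerivAt).fderiv]

lemma partialDeriv_fun_sum {κ : Type*} {s : Finset κ} {U : κ → Spacetime ι → F}
    (hU : ∀ k ∈ s, ContDiff ℝ ∞ (U k)) (μ : Option ι) :
    partialDeriv μ (fun p => ∑ k ∈ s, U k p) = fun p => ∑ k ∈ s, partialDeriv μ (U k) p := by
  ext p
  simp [partialDeriv, fderiv_fun_sum fun k hk => (hU k hk).differentiable (by simp) p]

lemma partialDeriv_mul {f g : Spacetime ι → ℝ} (hf : ContDiff ℝ ∞ f) (hg : ContDiff ℝ ∞ g)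
    (μ : Option ι) :
    partialDeriv μ (f * g) = fun p => f p * partialDeriv μ g p + partialDeriv μ f p * g p := by
  ext p
  simp [partialDeriv, fderiv_mul (hf.differentiable (by simp) p) (hg.differentiable (by simp) p),
    mul_comm]

lemma norm_sq_spacetimeGradient (U : Spacetime ι → ℝ) (p : Spacetime ι) :
    ‖spacetimeGradient U p‖ ^ 2 = ∑ μ, partialDeriv μ U p ^ 2 :=
  EuclideanSpace.real_norm_sq_eq _

lemma contDiff_spacetimeGradient {U : Spacetime ι → ℝ} (hU : ContDiff ℝ ∞ U) :
    ContDiff ℝ ∞ (spacetimeGradient U) :=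
  contDiff_euclidean.2 fun μ => contDiff_partialDeriv hU μ

lemma spacetimeGradient_add {U V : Spacetime ι → ℝ} (hU : ContDiff ℝ ∞ U) (hV : ContDiff ℝ ∞ V) :
    spacetimeGradient (U + V) = spacetimeGradient U + spacetimeGradient V := by
  ext p μ
  simp [spacetimeGradient, partialDeriv_add hU hV]

namespace IsWaveSolution

variable {U V : Spacetime ι → F}

lemma add (hU : IsWaveSolution U) (hV : IsWaveSolution V) : IsWaveSolution (U + V) where
  contDiff := hU.contDiff.add hV.contDiff
  wave_eq p := by
    simp only [partialDeriv_add hU.contDiff hV.contDiff,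
      partialDeriv_add (contDiff_partialDeriv hU.contDiff _) (contDiff_partialDeriv hV.contDiff _),
      Pi.add_apply, hU.wave_eq, hV.wave_eq, Finset.sum_add_distrib]

lemma clm_comp (L : F →L[ℝ] G) (hU : IsWaveSolution U) : IsWaveSolution (L ∘ U) where
  contDiff := L.contDiff.comp hU.contDiff
  wave_eq p := by
    simp only [partialDeriv_clm_comp L hU.contDiff,
      partialDeriv_clm_comp L (contDiff_partialDeriv hU.contDiff _), Function.comp_apply,
      hU.wave_eq, map_sum]

lemma sub (hU : IsWaveSolution U) (hV : IsWaveSolution V) : IsWaveSolution (U - V) := by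
  rw [sub_eq_add_neg]
  exact hU.add (hV.clm_comp (-ContinuousLinearMap.id ℝ F))

protected lemma partialDeriv (hU : IsWaveSolution U) (μ : Option ι) :
    IsWaveSolution (partialDeriv μ U) where
  contDiff := contDiff_partialDeriv hU.contDiff μ
  wave_eq p := by
    have commute (ν : Option ι) : partialDeriv ν (partialDeriv ν (partialDeriv μ U)) =
        partialDeriv μ (partialDeriv ν (partialDeriv ν U)) := by
      rw [partialDeriv_comm hU.contDiff, partialDeriv_comm (contDiff_partialDeriv hU.contDiff _)]
    simp only [commute]
    rw [funext hU.wave_eq, partialDeriv_fun_sum fun j _ =>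
      contDiff_partialDeriv (contDiff_partialDeriv hU.contDiff _) _]

end IsWaveSolution

lemma timeReversal_coordDir (μ : Option ι) :
    timeReversal ι (coordDir μ) = (μ.elim (-1) 1 : ℝ) • coordDir μ := by
  cases μ <;> simp [timeReversal_apply, coordDir]

lemma partialDeriv_comp_timeReversal {U : Spacetime ι → F} (hU : ContDiff ℝ ∞ U) (μ : Option ι) :
    partialDeriv μ (U ∘ timeReversal ι) =
      (μ.elim (-1) 1 : ℝ) • partialDeriv μ U ∘ timeReversal ι := by
  ext p
  have hd := (hU.differentiable (by simp) (timeReversal ι p)).hasFDerivAt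
  simp [partialDeriv, (hd.comp p (timeReversal ι).hasFDerivAt).fderiv, timeReversal_coordDir]

lemma norm_spacetimeGradient_comp_timeReversal {U : Spacetime ι → ℝ} (hU : ContDiff ℝ ∞ U)
    (p : Spacetime ι) :
    ‖spacetimeGradient (U ∘ timeReversal ι) p‖ = ‖spacetimeGradient U (timeReversal ι p)‖ := by
  rw [← sq_eq_sq₀ (norm_nonneg _) (norm_nonneg _), norm_sq_spacetimeGradient,
    norm_sq_spacetimeGradient]
  simp [partialDeriv_comp_timeReversal hU, Fintype.sum_option]

lemma IsWaveSolution.comp_timeReversal {U : Spacetime ι → F} (hU : IsWaveSolution U) :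
    IsWaveSolution (U ∘ timeReversal ι) where
  contDiff := hU.contDiff.comp (timeReversal ι).contDiff
  wave_eq p := by
    have second (μ : Option ι) : partialDeriv μ (partialDeriv μ (U ∘ timeReversal ι)) p =
        partialDeriv μ (partialDeriv μ U) (timeReversal ι p) := by
      have hμ := contDiff_partialDeriv hU.contDiff μ
      rw [partialDeriv_comp_timeReversal hU.contDiff,
        show (μ.elim (-1) 1 : ℝ) • partialDeriv μ U ∘ timeReversal ι =
          ((μ.elim (-1) 1 : ℝ) • ContinuousLinearMap.id ℝ F) ∘ (partialDeriv μ U ∘ timeReversal ι)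
          from rfl,
        partialDeriv_clm_comp _ (hμ.comp (timeReversal ι).contDiff),
        partialDeriv_comp_timeReversal hμ]
      cases μ <;> simp
    simp only [second, hU.wave_eq]

end WaveEquation

section EnergyConservation

lemma lintegral_le_of_tendsto {α : Type*} [MeasurableSpace α] {μ : Measure α} {f : ℕ → α → ENNReal}
    {g : α → ENNReal} {c : ENNReal} (hf : ∀ k, Measurable (f k))
    (hlim : ∀ x, Tendsto (fun k => f k x) atTop (𝓝 (g x))) (hle : ∀ k, ∫⁻ x, f k x ∂μ ≤ c) :
    ∫⁻ x, g x ∂μ ≤ c := by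
  rw [← funext fun x => (hlim x).liminf_eq]
  exact (lintegral_liminf_le hf).trans (liminf_le_of_frequently_le' (.of_forall hle))

variable {ι : Type*} [Fintype ι]

/-- A smooth cutoff to the backward light cone of the point `(T, 0)`, with `√(1 + ‖x‖²)` as a smooth
substitute for `‖x‖`. -/
def backwardConeCutoff (T : ℝ) (p : Spacetime ι) : ℝ :=
  Real.smoothTransition (T - p.1 - √(1 + ‖p.2‖ ^ 2))

lemma contDiff_backwardConeCutoff (T : ℝ) :
    ContDiff ℝ ∞ (backwardConeCutoff T : Spacetime ι → ℝ) := by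
  refine Real.smoothTransition.contDiff.comp ((contDiff_const.sub contDiff_fst).sub
    (ContDiff.sqrt (contDiff_const.add (contDiff_snd.norm_sq ℝ)) fun p => ?_))
  positivity

lemma backwardConeCutoff_eq_zero {T : ℝ} {p : Spacetime ι} (h : T - p.1 ≤ ‖p.2‖) :
    backwardConeCutoff T p = 0 := by
  refine Real.smoothTransition.zero_of_nonpos ?_
  have : ‖p.2‖ ≤ √(1 + ‖p.2‖ ^ 2) := Real.le_sqrt_of_sq_le (by linarith)
  linarith

lemma hasCompactSupport_cutoff_mul (T t : ℝ) (f : Spacetime ι → ℝ) :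
    HasCompactSupport fun x : EuclideanSpace ℝ ι => backwardConeCutoff T (t, x) * f (t, x) :=
  .intro (isCompact_closedBall 0 (T - t)) fun x hx => by
    rw [mem_closedBall_zero_iff, not_le] at hx
    rw [backwardConeCutoff_eq_zero hx.le, zero_mul]

lemma norm_le_of_mem_tsupport_cutoff_mul {T : ℝ} {f : Spacetime ι → ℝ} {p : Spacetime ι}
    (hp : p ∈ tsupport (backwardConeCutoff T * f)) : ‖p.2‖ ≤ T - p.1 := by
  have hclosed : IsClosed {q : Spacetime ι | ‖q.2‖ ≤ T - q.1} :=
    isClosed_le (by fun_prop) (by fun_prop)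
  refine closure_minimal (fun q hq => ?_) hclosed hp
  by_contra h
  exact hq (by rw [Pi.mul_apply, backwardConeCutoff_eq_zero (not_le.1 h).le, zero_mul])

lemma tendsto_backwardConeCutoff (p : Spacetime ι) :
    Tendsto (fun k : ℕ => backwardConeCutoff k p) atTop (𝓝 1) := by
  refine tendsto_const_nhds.congr' ?_
  filter_upwards [tendsto_natCast_atTop_atTop.eventually_ge_atTop (1 + p.1 + √(1 + ‖p.2‖ ^ 2))]
    with k hk
  exact (Real.smoothTransition.one_of_one_le (by linarith)).symm

lemma mul_add_sum_sq_le_two_mul_sum {c a : ℝ} {d b : ι → ℝ} (hc : c ≤ 0)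
    (hd : ∑ j, d j ^ 2 ≤ c ^ 2) :
    c * (a ^ 2 + ∑ j, b j ^ 2) ≤ 2 * ∑ j, d j * (a * b j) := by
  have cauchy_schwarz : (∑ j, d j * b j) ^ 2 ≤ c ^ 2 * ∑ j, b j ^ 2 :=
    (Finset.sum_mul_sq_le_sq_mul_sq _ _ _).trans (by gcongr)
  have hsum : ∑ j, d j * (a * b j) = a * ∑ j, d j * b j := by
    rw [Finset.mul_sum]
    exact Finset.sum_congr rfl fun j _ => by ring
  have hS : 0 ≤ ∑ j, b j ^ 2 := by positivity
  rw [hsum]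
  set S := ∑ j, b j ^ 2
  set X := ∑ j, d j * b j
  have hsq : (2 * (a * X)) ^ 2 ≤ (-c * (a ^ 2 + S)) ^ 2 :=
    calc (2 * (a * X)) ^ 2 = 4 * a ^ 2 * X ^ 2 := by ring
      _ ≤ 4 * a ^ 2 * (c ^ 2 * S) := by gcongr
      _ ≤ (-c * (a ^ 2 + S)) ^ 2 := by nlinarith [sq_nonneg (c * (a ^ 2 - S))]
  have := (abs_le_of_sq_le_sq' hsq (mul_nonneg (neg_nonneg.2 hc) (by positivity))).1
  linarith

variable [DecidableEq ι] {U : Spacetime ι → ℝ}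

lemma partialDeriv_norm_sq_spacetimeGradient (hU : ContDiff ℝ ∞ U) (ν : Option ι) :
    partialDeriv ν (fun p => ‖spacetimeGradient U p‖ ^ 2) =
      fun p => ∑ μ, 2 * partialDeriv μ U p * partialDeriv ν (partialDeriv μ U) p := by
  have hμ (μ : Option ι) := contDiff_partialDeriv hU μ
  simp only [norm_sq_spacetimeGradient]
  rw [partialDeriv_fun_sum fun μ _ => (hμ μ).pow 2]
  ext p
  refine Finset.sum_congr rfl fun μ _ => ?_
  rw [show (fun q => partialDeriv μ U q ^ 2) = partialDeriv μ U * partialDeriv μ U from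
    funext fun q => sq _, partialDeriv_mul (hμ μ) (hμ μ)]
  ring

/-- The momentum density `∂_t U ∂_j U` in the direction `j`, whose spatial divergence is half the
time derivative of `‖∇U‖²` when `U` solves the wave equation. -/
def momentumDensity (U : Spacetime ι → ℝ) (j : ι) : Spacetime ι → ℝ :=
  partialDeriv none U * partialDeriv (some j) U

lemma contDiff_momentumDensity (hU : ContDiff ℝ ∞ U) (j : ι) :
    ContDiff ℝ ∞ (momentumDensity U j) :=
  (contDiff_partialDeriv hU _).mul (contDiff_partialDeriv hU _)

lemma IsWaveSolution.partialDeriv_none_norm_sq_spacetimeGradient (hU : IsWaveSolution U)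
    (p : Spacetime ι) : partialDeriv none (fun q => ‖spacetimeGradient U q‖ ^ 2) p =
      2 * ∑ j, partialDeriv (some j) (momentumDensity U j) p := by
  have hμ (μ : Option ι) := contDiff_partialDeriv hU.contDiff μ
  simp only [partialDeriv_norm_sq_spacetimeGradient hU.contDiff, Fintype.sum_option, hU.wave_eq,
    momentumDensity, partialDeriv_mul (hμ _) (hμ _), partialDeriv_comm hU.contDiff (some _) none,
    Finset.mul_sum, ← Finset.sum_add_distrib]
  exact Finset.sum_congr rfl fun j _ => by ring

lemma partialDeriv_backwardConeCutoff (T : ℝ) (μ : Option ι) (p : Spacetime ι) :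
    partialDeriv μ (backwardConeCutoff T) p =
      -(deriv Real.smoothTransition (T - p.1 - √(1 + ‖p.2‖ ^ 2)) *
        μ.elim 1 fun j => p.2 j / √(1 + ‖p.2‖ ^ 2)) := by
  have hsqrt : HasFDerivAt (fun q : Spacetime ι => √(1 + ‖q.2‖ ^ 2)) _ p :=
    (hasFDerivAt_snd.norm_sq.const_add 1).sqrt (by positivity)
  have hΨ : HasDerivAt Real.smoothTransition _ (T - p.1 - √(1 + ‖p.2‖ ^ 2)) :=
    ((Real.smoothTransition.contDiff (n := 1)).differentiable (by simp) _).hasDerivAt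
  have := (hΨ.comp_hasFDerivAt p ((hasFDerivAt_fst.const_sub T).sub hsqrt)).fderiv
  rw [partialDeriv, show fderiv ℝ (backwardConeCutoff T) p = _ from this]
  have cancel_two (a b : ℝ) : a⁻¹ * 2⁻¹ * (2 * b) = b / a := by ring
  cases μ <;> simp [coordDir, EuclideanSpace.inner_single_right, cancel_two]

lemma sum_sq_partialDeriv_backwardConeCutoff_le (T : ℝ) (p : Spacetime ι) :
    ∑ j, partialDeriv (some j) (backwardConeCutoff T) p ^ 2 ≤
      partialDeriv none (backwardConeCutoff T) p ^ 2 := by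
  simp only [partialDeriv_backwardConeCutoff, neg_sq, mul_pow, Option.elim, ← Finset.mul_sum,
    div_pow, ← Finset.sum_div, ← EuclideanSpace.real_norm_sq_eq]
  gcongr
  rw [Real.sq_sqrt (by positivity), one_pow, div_le_one (by positivity)]
  linarith

lemma partialDeriv_none_backwardConeCutoff_nonpos (T : ℝ) (p : Spacetime ι) :
    partialDeriv none (backwardConeCutoff T) p ≤ 0 := by
  simpa [partialDeriv_backwardConeCutoff] using Real.smoothTransition.monotone.deriv_nonneg

lemma IsWaveSolution.partialDeriv_none_cutoff_energy_le (hU : IsWaveSolution U) (T : ℝ)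
    (p : Spacetime ι) :
    partialDeriv none (backwardConeCutoff T * fun q => ‖spacetimeGradient U q‖ ^ 2) p ≤
      2 * ∑ j, partialDeriv (some j) (backwardConeCutoff T * momentumDensity U j) p := by
  have hχ := contDiff_backwardConeCutoff (ι := ι) T
  have flux_le := mul_add_sum_sq_le_two_mul_sum (a := partialDeriv none U p)
    (b := fun j => partialDeriv (some j) U p) (partialDeriv_none_backwardConeCutoff_nonpos T p)
    (sum_sq_partialDeriv_backwardConeCutoff_le T p)
  rw [partialDeriv_mul hχ ((contDiff_spacetimeGradient hU.contDiff).norm_sq ℝ)]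
  simp only [hU.partialDeriv_none_norm_sq_spacetimeGradient]
  simp only [norm_sq_spacetimeGradient,
    partialDeriv_mul hχ (contDiff_momentumDensity hU.contDiff _), Finset.sum_add_distrib,
    ← Finset.mul_sum, Fintype.sum_option]
  simp only [momentumDensity, Pi.mul_apply]
  linarith

lemma partialDeriv_cutoff_mul_eq_zero {T : ℝ} {p : Spacetime ι} (hp : T - p.1 < ‖p.2‖)
    (f : Spacetime ι → ℝ) (μ : Option ι) :
    partialDeriv μ (backwardConeCutoff T * f) p = 0 := by
  have hp' : p ∉ tsupport (backwardConeCutoff T * f) := fun h =>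
    hp.not_ge (norm_le_of_mem_tsupport_cutoff_mul h)
  rw [partialDeriv, fderiv_of_notMem_tsupport ℝ hp', _root_.zero_apply]

lemma integrable_partialDeriv_cutoff_mul (T t : ℝ) {f : Spacetime ι → ℝ} (hf : ContDiff ℝ ∞ f)
    (μ : Option ι) : Integrable fun x => partialDeriv μ (backwardConeCutoff T * f) (t, x) := by
  have hcont : Continuous (partialDeriv μ (backwardConeCutoff T * f)) :=
    (contDiff_partialDeriv ((contDiff_backwardConeCutoff T).mul hf) μ).continuous
  refine (hcont.comp (Continuous.prodMk_right t)).integrable_of_hasCompactSupport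
    (.intro (isCompact_closedBall 0 (T - t)) fun x hx => ?_)
  rw [mem_closedBall_zero_iff, not_le] at hx
  exact partialDeriv_cutoff_mul_eq_zero hx f μ

lemma integral_partialDeriv_some_cutoff_mul_eq_zero (T t : ℝ) {f : Spacetime ι → ℝ}
    (hf : ContDiff ℝ ∞ f) (j : ι) :
    ∫ x, partialDeriv (some j) (backwardConeCutoff T * f) (t, x) = 0 := by
  have hsmooth := (contDiff_backwardConeCutoff T).mul hf
  have to_slice (x : EuclideanSpace ℝ ι) :
      partialDeriv (some j) (backwardConeCutoff T * f) (t, x) =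
        fderiv ℝ (fun y => backwardConeCutoff T (t, y) * f (t, y)) x (EuclideanSpace.single j 1) :=
    (fderiv_slice_right (hsmooth.differentiable (by simp) _) _).symm
  simp only [to_slice]
  exact integral_fderiv_apply_eq_zero
    ((hsmooth.comp (contDiff_prodMk_right t)).of_le (mod_cast le_top))
    (hasCompactSupport_cutoff_mul T t f) _

lemma IsWaveSolution.antitone_integral_cutoff_energy (hU : IsWaveSolution U) (T : ℝ) :
    Antitone fun t => ∫ x, backwardConeCutoff T (t, x) * ‖spacetimeGradient U (t, x)‖ ^ 2 := by
  have he := (contDiff_spacetimeGradient hU.contDiff).norm_sq ℝ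
  have hmom := contDiff_momentumDensity hU.contDiff
  have hder (t : ℝ) := hasDerivAt_integral_slice (μ := volume)
    (((contDiff_backwardConeCutoff T).mul he).of_le (mod_cast le_top))
    (isCompact_closedBall 0 (T - (t - 1))) ((lt_mem_nhds (sub_one_lt t)).mono fun s hs x hx => by
      rw [mem_closedBall_zero_iff, not_le] at hx
      rw [backwardConeCutoff_eq_zero (by simp only; linarith), zero_mul])
  refine antitone_of_hasDerivAt_nonpos hder fun t => ?_
  calc ∫ x, partialDeriv none (backwardConeCutoff T * fun q => ‖spacetimeGradient U q‖ ^ 2) (t, x)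
    _ ≤ ∫ x, 2 * ∑ j, partialDeriv (some j) (backwardConeCutoff T * momentumDensity U j) (t, x) :=
      integral_mono (integrable_partialDeriv_cutoff_mul T t he none)
        ((integrable_finsetSum _ fun j _ =>
          integrable_partialDeriv_cutoff_mul T t (hmom j) (some j)).const_mul 2)
        fun x => hU.partialDeriv_none_cutoff_energy_le T (t, x)
    _ = 0 := by
      rw [integral_const_mul, integral_finsetSum _ fun j _ =>
        integrable_partialDeriv_cutoff_mul T t (hmom j) (some j)]
      simp [integral_partialDeriv_some_cutoff_mul_eq_zero T t (hmom _)]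

lemma IsWaveSolution.antitone_lintegral_energy (hU : IsWaveSolution U) :
    Antitone fun t => ∫⁻ x, ‖spacetimeGradient U (t, x)‖ₑ ^ 2 := by
  intro s t hst
  have hcont : Continuous (spacetimeGradient U) :=
    (contDiff_spacetimeGradient hU.contDiff).continuous
  have hχ (T : ℝ) := (contDiff_backwardConeCutoff (ι := ι) T).continuous
  have hint (T r : ℝ) : Integrable fun x =>
      backwardConeCutoff T (r, x) * ‖spacetimeGradient U (r, x)‖ ^ 2 :=
    (((hχ T).mul (hcont.norm.pow 2)).comp
      (Continuous.prodMk_right r)).integrable_of_hasCompactSupport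
        (hasCompactSupport_cutoff_mul T r _)
  have hnonneg (T r : ℝ) (x : EuclideanSpace ℝ ι) :
      0 ≤ backwardConeCutoff T (r, x) * ‖spacetimeGradient U (r, x)‖ ^ 2 :=
    mul_nonneg (Real.smoothTransition.nonneg _) (by positivity)
  have enorm_sq (p : Spacetime ι) :
      ‖spacetimeGradient U p‖ₑ ^ 2 = ENNReal.ofReal (‖spacetimeGradient U p‖ ^ 2) := by
    rw [ENNReal.ofReal_pow (norm_nonneg _), ofReal_norm]
  have cutoff_le (k : ℕ) : ∫⁻ x, ENNReal.ofReal
      (backwardConeCutoff k (t, x) * ‖spacetimeGradient U (t, x)‖ ^ 2) ≤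
        ∫⁻ x, ‖spacetimeGradient U (s, x)‖ₑ ^ 2 := by
    rw [← ofReal_integral_eq_lintegral_ofReal (hint k t) (.of_forall (hnonneg k t))]
    refine (ENNReal.ofReal_le_ofReal (hU.antitone_integral_cutoff_energy k hst)).trans ?_
    rw [ofReal_integral_eq_lintegral_ofReal (hint k s) (.of_forall (hnonneg k s))]
    simp only [enorm_sq]
    exact lintegral_mono fun x => ENNReal.ofReal_le_ofReal
      (mul_le_of_le_one_left (by positivity) (Real.smoothTransition.le_one _))
  refine lintegral_le_of_tendsto (fun k => ?_) (fun x => ?_) cutoff_le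
  · exact (ENNReal.continuous_ofReal.comp (((hχ k).mul (hcont.norm.pow 2)).comp
      (Continuous.prodMk_right t))).measurable
  · rw [enorm_sq]
    simpa only [one_mul, Function.comp_def] using (ENNReal.continuous_ofReal.tendsto _).comp
      ((tendsto_backwardConeCutoff (t, x)).mul_const (‖spacetimeGradient U (t, x)‖ ^ 2))

lemma IsWaveSolution.lintegral_energy_eq (hU : IsWaveSolution U) (s t : ℝ) :
    ∫⁻ x, ‖spacetimeGradient U (s, x)‖ₑ ^ 2 = ∫⁻ x, ‖spacetimeGradient U (t, x)‖ₑ ^ 2 := by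
  wlog hst : t ≤ s generalizing s t
  · exact (this t s (le_of_not_ge hst)).symm
  refine (hU.antitone_lintegral_energy hst).antisymm ?_
  have reversed := hU.comp_timeReversal.antitone_lintegral_energy (neg_le_neg hst)
  simp only [← ofReal_norm, norm_spacetimeGradient_comp_timeReversal hU.contDiff,
    timeReversal_apply, neg_neg] at reversed
  simpa only [ofReal_norm] using reversed

end EnergyConservation

section SpatialConvolution

variable {E F : Type*} [NormedAddCommGroup E] [MeasureSpace E]
  [NormedAddCommGroup F] [NormedSpace ℝ F]

/-- The convolution in the space variable, `(t, x) ↦ ∫ g(y) κ(t, x - y) dy`, of a function on space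
with a kernel on space-time. -/
def spatialConv (g : E → ℝ) (κ : ℝ × E → F) (p : ℝ × E) : F :=
  ∫ y, g y • κ (p - (0, y))

lemma setIntegral_tsupport_smul_kernel (g : E → ℝ) (κ : ℝ × E → F) (p : ℝ × E) :
    ∫ y in tsupport g, g y • κ (p - (0, y)) = spatialConv g κ p :=
  setIntegral_eq_integral_of_forall_compl_eq_zero fun y hy => by
    rw [image_eq_zero_of_notMem_tsupport hy, zero_smul]

variable [BorelSpace E] [IsLocallyFiniteMeasure (volume : Measure E)] {g : E → ℝ}
  {κ : ℝ × E → F}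

lemma integrable_smul_kernel (hg : Continuous g) (hgs : HasCompactSupport g) (hκ : Continuous κ)
    (p : ℝ × E) : Integrable fun y => g y • κ (p - (0, y)) :=
  (hg.smul (hκ.comp (by fun_prop))).integrable_of_hasCompactSupport hgs.smul_right

lemma spatialConv_finset_sum (hg : Continuous g) (hgs : HasCompactSupport g) {J : Type*}
    (s : Finset J) {κ : J → ℝ × E → F} (hκ : ∀ j ∈ s, Continuous (κ j)) (p : ℝ × E) :
    spatialConv g (fun q => ∑ j ∈ s, κ j q) p = ∑ j ∈ s, spatialConv g (κ j) p := by
  simp only [spatialConv, Finset.smul_sum]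
  exact integral_finsetSum s fun j hj => integrable_smul_kernel hg hgs (hκ j hj) p

lemma continuous_spatialConv [ProperSpace E] (hg : Continuous g) (hgs : HasCompactSupport g)
    (hκ : Continuous κ) : Continuous (spatialConv g κ) := by
  rw [← funext (setIntegral_tsupport_smul_kernel g κ)]
  exact continuous_parametric_integral_of_continuous (by fun_prop) hgs

variable [NormedSpace ℝ E]

lemma hasFDerivAt_spatialConv [ProperSpace E] (hg : Continuous g) (hgs : HasCompactSupport g)
    (hκ : ContDiff ℝ 1 κ) (p : ℝ × E) :
    HasFDerivAt (spatialConv g κ) (spatialConv g (fderiv ℝ κ) p) p := by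
  have : Continuous (fderiv ℝ κ) := hκ.continuous_fderiv (by simp)
  have hder (q : ℝ × E) (y : E) :
      HasFDerivAt (fun q => g y • κ (q - (0, y))) (g y • fderiv ℝ κ (q - (0, y))) q :=
    ((hκ.differentiable (by simp) _).hasFDerivAt.comp q
      ((hasFDerivAt_id q).sub_const (0, y))).const_smul (g y)
  have := hasFDerivAt_setIntegral_of_isCompact (μ := volume) hgs
    (f := fun q y => g y • κ (q - (0, y))) (f' := fun q y => g y • fderiv ℝ κ (q - (0, y)))
    (by fun_prop) (by fun_prop) hder p
  simpa only [setIntegral_tsupport_smul_kernel] using this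

lemma fderiv_spatialConv_apply [ProperSpace E] (hg : Continuous g) (hgs : HasCompactSupport g)
    (hκ : ContDiff ℝ 1 κ) (v : ℝ × E) :
    (fun p => fderiv ℝ (spatialConv g κ) p v) = spatialConv g fun q => fderiv ℝ κ q v := by
  ext p
  rw [(hasFDerivAt_spatialConv hg hgs hκ p).fderiv, spatialConv,
    ContinuousLinearMap.integral_apply
      (integrable_smul_kernel hg hgs (hκ.continuous_fderiv (by simp)) p)]
  rfl

lemma contDiff_spatialConv [FiniteDimensional ℝ E] (hg : Continuous g) (hgs : HasCompactSupport g)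
    (hκ : ContDiff ℝ ∞ κ) : ContDiff ℝ ∞ (spatialConv g κ) := by
  have := FiniteDimensional.proper_real E
  refine contDiff_infty.2 fun n => ?_
  induction n generalizing κ with
  | zero => exact contDiff_zero.2 (continuous_spatialConv hg hgs hκ.continuous)
  | succ n ih =>
    have h1 : ContDiff ℝ 1 κ := hκ.of_le (mod_cast le_top)
    refine (contDiff_succ_iff_fderiv_apply (n := n)).2
      ⟨fun p => (hasFDerivAt_spatialConv hg hgs h1 p).differentiableAt, nofun, fun v => ?_⟩
    rw [fderiv_spatialConv_apply hg hgs h1]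
    exact ih (contDiff_fderiv_apply hκ v)

end SpatialConvolution

section SpatialConvolutionWave

variable {ι F : Type*} [Fintype ι] [DecidableEq ι] [NormedAddCommGroup F] [NormedSpace ℝ F]
  {g : EuclideanSpace ℝ ι → ℝ} {κ : Spacetime ι → F}

lemma partialDeriv_spatialConv (hg : Continuous g) (hgs : HasCompactSupport g)
    (hκ : ContDiff ℝ ∞ κ) (μ : Option ι) :
    partialDeriv μ (spatialConv g κ) = spatialConv g (partialDeriv μ κ) :=
  fderiv_spatialConv_apply hg hgs (hκ.of_le (mod_cast le_top)) (coordDir μ)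

protected lemma IsWaveSolution.spatialConv (hg : Continuous g) (hgs : HasCompactSupport g)
    (hκ : IsWaveSolution κ) : IsWaveSolution (spatialConv g κ) where
  contDiff := contDiff_spatialConv hg hgs hκ.contDiff
  wave_eq p := by
    have hμ := contDiff_partialDeriv hκ.contDiff
    simp only [partialDeriv_spatialConv hg hgs hκ.contDiff, partialDeriv_spatialConv hg hgs (hμ _)]
    rw [← spatialConv_finset_sum hg hgs _ fun j _ =>
      (contDiff_partialDeriv (hμ (some j)) (some j)).continuous, funext hκ.wave_eq]

end SpatialConvolutionWave

section ConeAsymptotics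

instance isCountablyGenerated_cobounded {E : Type*} [SeminormedAddGroup E] :
    (Bornology.cobounded E).IsCountablyGenerated := by
  rw [← comap_norm_atTop]
  infer_instance

lemma zpow_le_natAbs_pow_mul_zpow {A B c : ℝ} (hA : 0 < A) (hB : 0 < B) (hAB : A ≤ c * B)
    (hBA : B ≤ c * A) (k : ℤ) : A ^ k ≤ c ^ k.natAbs * B ^ k := by
  obtain ⟨n, rfl | rfl⟩ := k.eq_nat_or_neg
  · simpa [mul_pow] using pow_le_pow_left₀ hA.le hAB n
  · have := pow_le_pow_left₀ hB.le hBA n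
    rw [mul_pow] at this
    simp only [Int.natAbs_neg, Int.natAbs_natCast, zpow_neg, zpow_natCast, ← div_eq_mul_inv]
    rwa [inv_eq_one_div, div_le_div_iff₀ (by positivity) (by positivity), one_mul]

variable {E F G : Type*} [NormedAddCommGroup E] [NormedAddCommGroup F] [NormedSpace ℝ F]
  [NormedAddCommGroup G] [NormedSpace ℝ G]

/-- The weight `(1 + ‖x‖ + |t|)^k (1 + |‖x‖ - |t||)^l`, measuring growth at infinity and,
separately, transversally to the light cone. -/
def coneWeight (k l : ℤ) (p : ℝ × E) : ℝ :=
  (1 + ‖p.2‖ + |p.1|) ^ k * (1 + |(‖p.2‖ - |p.1|)|) ^ l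

lemma coneWeight_nonneg (k l : ℤ) (p : ℝ × E) : 0 ≤ coneWeight k l p := by
  unfold coneWeight; positivity

lemma coneWeight_add (k l k' l' : ℤ) (p : ℝ × E) :
    coneWeight (k + k') (l + l') p = coneWeight k l p * coneWeight k' l' p := by
  unfold coneWeight
  rw [zpow_add₀ (by positivity), zpow_add₀ (by positivity)]
  ring

lemma coneWeight_mono {k k' l l' : ℤ} (hk : k ≤ k') (hl : l ≤ l') (p : ℝ × E) :
    coneWeight k l p ≤ coneWeight k' l' p := by
  unfold coneWeight
  gcongr
  · linarith [norm_nonneg p.2, abs_nonneg p.1]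
  · linarith [abs_nonneg (‖p.2‖ - |p.1|)]

lemma coneWeight_sub_le (k l : ℤ) {y : E} {R : ℝ} (hy : ‖y‖ ≤ R) (p : ℝ × E) :
    coneWeight k l (p - (0, y)) ≤
      (1 + R) ^ k.natAbs * (1 + R) ^ l.natAbs * coneWeight k l p := by
  have hR : 0 ≤ R := (norm_nonneg y).trans hy
  have hx := norm_sub_le p.2 y
  have hx' := norm_sub_norm_le p.2 y
  unfold coneWeight
  simp only [Prod.fst_sub, Prod.snd_sub, sub_zero]
  refine (mul_le_mul (zpow_le_natAbs_pow_mul_zpow (c := 1 + R) (B := 1 + ‖p.2‖ + |p.1|)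
    (by positivity) (by positivity) ?_ ?_ k) (zpow_le_natAbs_pow_mul_zpow (c := 1 + R)
    (B := 1 + |(‖p.2‖ - |p.1|)|) (by positivity) (by positivity) ?_ ?_ l)
    (by positivity) (by positivity)).trans_eq (by ring)
  · nlinarith [norm_nonneg p.2, abs_nonneg p.1]
  · nlinarith [norm_nonneg (p.2 - y), abs_nonneg p.1]
  · have := abs_sub_le ‖p.2 - y‖ ‖p.2‖ |p.1|
    have := abs_norm_sub_norm_le (p.2 - y) p.2
    rw [sub_sub_cancel_left, norm_neg] at this
    nlinarith [abs_nonneg (‖p.2‖ - |p.1|)]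
  · have := abs_sub_le ‖p.2‖ ‖p.2 - y‖ |p.1|
    have := abs_norm_sub_norm_le p.2 (p.2 - y)
    rw [sub_sub_cancel] at this
    nlinarith [abs_nonneg (‖p.2 - y‖ - |p.1|)]

variable [NormedSpace ℝ E]

/-- The point of the light ray `w ↦ (w, (w + s) θ - y)` at time `w`; as `w` runs over `ℝ`
and `s`, `θ` are fixed, it stays at bounded distance from the light cone. -/
def lightRay (θ y : E) (s w : ℝ) : ℝ × E :=
  (w, (w + s) • θ - y)

lemma coneWeight_lightRay_le (k l : ℤ) {θ y : E} (hθ : ‖θ‖ = 1) {R : ℝ} (hy : ‖y‖ ≤ R) (s : ℝ)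
    {w : ℝ} (hw : 1 ≤ |w|) :
    coneWeight k l (lightRay θ y s w) ≤
      (3 + |s| + R) ^ k.natAbs * |w| ^ k * (3 + |s| + R) ^ l.natAbs := by
  have hR : 0 ≤ R := (norm_nonneg y).trans hy
  have hx := norm_sub_le ((w + s) • θ) y
  have hdist := abs_norm_sub_norm_le ((w + s) • θ - y) (w • θ)
  have hshift : (w + s) • θ - y - w • θ = s • θ - y := by module
  have hsθ := norm_sub_le (s • θ) y
  have hws := abs_add_le w s
  rw [hshift] at hdist
  simp only [norm_smul, hθ, mul_one, Real.norm_eq_abs] at hx hdist hsθ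
  unfold coneWeight lightRay
  refine mul_le_mul (zpow_le_natAbs_pow_mul_zpow (by positivity) (by positivity) ?_ ?_ k)
    ((zpow_le_natAbs_pow_mul_zpow (c := 3 + |s| + R) (B := 1) (by positivity) one_pos
      ?_ ?_ l).trans_eq (by simp)) (by positivity) (by positivity)
  · simp only; nlinarith [abs_nonneg s]
  · simp only
    nlinarith [norm_nonneg ((w + s) • θ - y), abs_nonneg s]
  · simp only; linarith
  · have : 0 ≤ |(‖(w + s) • θ - y‖ - |w|)| := abs_nonneg _
    simp only; nlinarith [abs_nonneg s]

/-- `κ` is bounded by the weight `coneWeight k l`, and along light rays `w⁻ᵏ κ` has a limit which is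
the same for `w → +∞` and for `w → -∞`. -/
structure HasConeAsymptotics (k l : ℤ) (κ : ℝ × E → F) : Prop where
  continuous : Continuous κ
  exists_bound : ∃ C, ∀ p, ‖κ p‖ ≤ C * coneWeight k l p
  exists_limit : ∀ θ y s, ‖θ‖ = 1 →
    ∃ c, Tendsto (fun w => w ^ (-k) • κ (lightRay θ y s w)) (Bornology.cobounded ℝ) (𝓝 c)

namespace HasConeAsymptotics

variable {k l k' l' : ℤ} {κ κ' : ℝ × E → F}

lemma exists_nonneg_bound (hκ : HasConeAsymptotics k l κ) :
    ∃ C, 0 ≤ C ∧ ∀ p, ‖κ p‖ ≤ C * coneWeight k l p := by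
  obtain ⟨C, hC⟩ := hκ.exists_bound
  exact ⟨max C 0, le_max_right _ _, fun p => (hC p).trans
    (mul_le_mul_of_nonneg_right (le_max_left _ _) (coneWeight_nonneg _ _ p))⟩

lemma mono (hκ : HasConeAsymptotics k l κ) (hk : k ≤ k') (hl : l ≤ l') :
    HasConeAsymptotics k' l' κ where
  continuous := hκ.continuous
  exists_bound := by
    obtain ⟨C, hC, hb⟩ := hκ.exists_nonneg_bound
    exact ⟨C, fun p => (hb p).trans (mul_le_mul_of_nonneg_left (coneWeight_mono hk hl p) hC)⟩
  exists_limit θ y s hθ := by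
    obtain ⟨c, hc⟩ := hκ.exists_limit θ y s hθ
    obtain ⟨n, rfl⟩ := Int.le.dest hk
    refine ⟨_, (((tendsto_inv₀_cobounded (α := ℝ)).pow n).smul hc).congr' ?_⟩
    filter_upwards [Bornology.eventually_ne_cobounded 0] with w hw
    rw [smul_smul, neg_add_rev, zpow_add₀ hw, zpow_neg w n, zpow_natCast, inv_pow]

lemma add (hκ : HasConeAsymptotics k l κ) (hκ' : HasConeAsymptotics k l κ') :
    HasConeAsymptotics k l (κ + κ') where
  continuous := hκ.continuous.add hκ'.continuous
  exists_bound := by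
    obtain ⟨C, hC⟩ := hκ.exists_bound
    obtain ⟨C', hC'⟩ := hκ'.exists_bound
    exact ⟨C + C', fun p => (norm_add_le_of_le (hC p) (hC' p)).trans_eq (add_mul _ _ _).symm⟩
  exists_limit θ y s hθ := by
    obtain ⟨c, hc⟩ := hκ.exists_limit θ y s hθ
    obtain ⟨c', hc'⟩ := hκ'.exists_limit θ y s hθ
    exact ⟨c + c', by simpa only [Pi.add_apply, smul_add] using hc.add hc'⟩

lemma clm_comp (hκ : HasConeAsymptotics k l κ) (L : F →L[ℝ] G) :
    HasConeAsymptotics k l (L ∘ κ) where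
  continuous := L.continuous.comp hκ.continuous
  exists_bound := by
    obtain ⟨C, hC⟩ := hκ.exists_bound
    exact ⟨‖L‖ * C, fun p => (L.le_opNorm_of_le (hC p)).trans_eq (mul_assoc _ _ _).symm⟩
  exists_limit θ y s hθ := by
    obtain ⟨c, hc⟩ := hκ.exists_limit θ y s hθ
    exact ⟨L c, by simpa only [Function.comp_def, map_smul] using (L.continuous.tendsto c).comp hc⟩

lemma const (c : F) : HasConeAsymptotics 0 0 fun _ : ℝ × E => c where
  continuous := continuous_const
  exists_bound := ⟨‖c‖, fun p => by simp [coneWeight]⟩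
  exists_limit _ _ _ _ := ⟨c, by simp⟩

variable {A : Type*} [NormedRing A] [NormedAlgebra ℝ A] {f g : ℝ × E → A}

lemma mul (hf : HasConeAsymptotics k l f) (hg : HasConeAsymptotics k' l' g) :
    HasConeAsymptotics (k + k') (l + l') (f * g) where
  continuous := hf.continuous.mul hg.continuous
  exists_bound := by
    obtain ⟨C, hf⟩ := hf.exists_bound
    obtain ⟨C', hg⟩ := hg.exists_bound
    refine ⟨C * C', fun p => (norm_mul_le_of_le (hf p) (hg p)).trans_eq ?_⟩
    rw [coneWeight_add]
    ring
  exists_limit θ y s hθ := by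
    obtain ⟨c, hc⟩ := hf.exists_limit θ y s hθ
    obtain ⟨c', hc'⟩ := hg.exists_limit θ y s hθ
    refine ⟨c * c', (hc.mul hc').congr' ?_⟩
    filter_upwards [Bornology.eventually_ne_cobounded 0] with w hw
    rw [smul_mul_smul_comm, neg_add, zpow_add₀ hw, Pi.mul_apply]

lemma pow (hf : HasConeAsymptotics k l f) (m : ℕ) : HasConeAsymptotics (m * k) (m * l) (f ^ m) := by
  induction m with
  | zero => simpa [Pi.one_def] using const (E := E) (1 : A)
  | succ m ih => simpa [pow_succ, add_mul] using ih.mul hf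

lemma euclidean {J : Type*} [Fintype J] {κ : ℝ × E → EuclideanSpace ℝ J}
    (hκ : ∀ j, HasConeAsymptotics k l fun p => κ p j) : HasConeAsymptotics k l κ where
  continuous := (PiLp.continuous_toLp 2 _).comp (continuous_pi fun j => (hκ j).continuous)
  exists_bound := by
    choose C hC using fun j => (hκ j).exists_bound
    refine ⟨∑ j, C j, fun p => ?_⟩
    rw [EuclideanSpace.norm_eq, Finset.sum_mul]
    refine le_trans ?_ (Finset.sum_le_sum fun j _ => hC j p)
    exact (Real.sqrt_le_left (Finset.sum_nonneg fun _ _ => norm_nonneg _)).2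
      (Finset.sum_sq_le_sq_sum_of_nonneg fun _ _ => norm_nonneg _)
  exists_limit θ y s hθ := by
    choose c hc using fun j => (hκ j).exists_limit θ y s hθ
    exact ⟨WithLp.toLp 2 c, ((PiLp.continuous_toLp 2 _).tendsto c).comp (tendsto_pi_nhds.2 hc)⟩

lemma norm_zpow_smul_lightRay_le {C : ℝ} (hC : 0 ≤ C)
    (hbound : ∀ p, ‖κ p‖ ≤ C * coneWeight k l p) {θ y : E} (hθ : ‖θ‖ = 1) {R : ℝ} (hy : ‖y‖ ≤ R)
    (s : ℝ) {w : ℝ} (hw : 1 ≤ |w|) :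
    ‖w ^ (-k) • κ (lightRay θ y s w)‖ ≤
      C * ((3 + |s| + R) ^ k.natAbs * (3 + |s| + R) ^ l.natAbs) := by
  have : 0 < |w| := one_pos.trans_le hw
  rw [norm_smul, norm_zpow, Real.norm_eq_abs]
  calc |w| ^ (-k) * ‖κ (lightRay θ y s w)‖
    _ ≤ |w| ^ (-k) *
        (C * ((3 + |s| + R) ^ k.natAbs * |w| ^ k * (3 + |s| + R) ^ l.natAbs)) := by
      gcongr
      exact (hbound _).trans (mul_le_mul_of_nonneg_left (coneWeight_lightRay_le k l hθ hy s hw) hC)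
    _ = C * ((3 + |s| + R) ^ k.natAbs * (3 + |s| + R) ^ l.natAbs) := by
      rw [zpow_neg]
      field_simp

variable [MeasureSpace E] [BorelSpace E] [ProperSpace E]
  [IsLocallyFiniteMeasure (volume : Measure E)] {u : E → ℝ}

protected lemma spatialConv (hu : Continuous u) (hus : HasCompactSupport u)
    (hκ : HasConeAsymptotics k l κ) : HasConeAsymptotics k l (spatialConv u κ) := by
  obtain ⟨C, hC, hbound⟩ := hκ.exists_nonneg_bound
  obtain ⟨R, hR⟩ := hus.isBounded.exists_norm_le
  have hu_int : Integrable u := hu.integrable_of_hasCompactSupport hus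
  have norm_smul_le {y : E} {a : F} {M : ℝ} (h : y ∈ tsupport u → ‖a‖ ≤ M) :
      ‖u y • a‖ ≤ ‖u y‖ * M := by
    by_cases hy : y ∈ tsupport u
    · exact (norm_smul _ _).trans_le (by gcongr; exact h hy)
    · simp [image_eq_zero_of_notMem_tsupport hy]
  refine ⟨continuous_spatialConv hu hus hκ.continuous, ?_, fun θ y s hθ => ?_⟩
  · refine ⟨(∫ y, ‖u y‖) * (C * ((1 + R) ^ k.natAbs * (1 + R) ^ l.natAbs)), fun p => ?_⟩
    rw [mul_assoc, mul_assoc C, ← integral_mul_const]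
    refine norm_integral_le_of_norm_le (hu_int.norm.mul_const _) (.of_forall fun y => ?_)
    exact norm_smul_le fun hy => (hbound _).trans
      (mul_le_mul_of_nonneg_left (coneWeight_sub_le k l (hR y hy) p) hC)
  · choose c hc using fun z => hκ.exists_limit θ (y + z) s hθ
    refine ⟨∫ z, u z • c z, ?_⟩
    have ray_sub (z : E) (w : ℝ) : lightRay θ y s w - (0, z) = lightRay θ (y + z) s w := by
      simp [lightRay, sub_sub]
    simp only [spatialConv, ← integral_smul, ray_sub, smul_comm (_ : ℝ) (u _)]
    refine tendsto_integral_filter_of_dominated_convergence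
      (fun z => ‖u z‖ * (C * ((3 + |s| + (‖y‖ + R)) ^ k.natAbs * (3 + |s| + (‖y‖ + R)) ^ l.natAbs)))
      ?_ ?_ (hu_int.norm.mul_const _) (.of_forall fun z => (hc z).const_smul (u z))
    · exact .of_forall fun w => (hu.aestronglyMeasurable.smul
        ((hκ.continuous.comp (by unfold lightRay; fun_prop)).aestronglyMeasurable.const_smul _))
    · filter_upwards [tendsto_norm_cobounded_atTop.eventually_ge_atTop 1] with w hw
      refine .of_forall fun z => norm_smul_le fun hz => ?_
      exact norm_zpow_smul_lightRay_le hC hbound hθ (norm_add_le_of_le le_rfl (hR z hz)) s hw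

end HasConeAsymptotics

end ConeAsymptotics

section WaveKernel

variable {E : Type*} [NormedAddCommGroup E]

/-- The Minkowski square `‖x‖² - (t - ib)²` of the space-time point `(t - ib, x)`, whose time is
shifted into the complex domain to avoid the zeros on the light cone. -/
def minkowskiSq (b : ℝ) (p : ℝ × E) : ℂ := (‖p.2‖ ^ 2 : ℝ) - (p.1 - b * Complex.I) ^ 2

/-- The power `(‖x‖² - (t - ib)²)⁻ᵐ`, which solves the wave equation in space dimension `2m + 1`. -/
def waveKernel (b : ℝ) (m : ℕ) (p : ℝ × E) : ℂ := (minkowskiSq b p)⁻¹ ^ m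

lemma minkowskiSq_eq_mul (b : ℝ) (p : ℝ × E) : minkowskiSq b p =
    ((‖p.2‖ - p.1 : ℝ) + b * Complex.I) * ((‖p.2‖ + p.1 : ℝ) - b * Complex.I) := by
  simp only [minkowskiSq]
  push_cast
  ring

variable {b : ℝ}

lemma minkowskiSq_ne_zero (hb : b ≠ 0) (p : ℝ × E) : minkowskiSq b p ≠ 0 := by
  rw [minkowskiSq_eq_mul]
  refine mul_ne_zero (fun h => hb ?_) (fun h => hb ?_) <;> simpa using congrArg Complex.im h

lemma one_add_abs_le_mul_norm (hb : b ≠ 0) (a : ℝ) :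
    1 + |a| ≤ (1 + |b|⁻¹) * ‖(a + b * Complex.I : ℂ)‖ := by
  have hre : |a| ≤ ‖(a + b * Complex.I : ℂ)‖ := by
    simpa using Complex.abs_re_le_norm (a + b * Complex.I)
  have him : |b| ≤ ‖(a + b * Complex.I : ℂ)‖ := by
    simpa using Complex.abs_im_le_norm (a + b * Complex.I)
  have := mul_le_mul_of_nonneg_left him (inv_nonneg.2 (abs_nonneg b))
  rw [inv_mul_cancel₀ (abs_ne_zero.2 hb)] at this
  linarith

lemma one_add_mul_one_add_le_norm_minkowskiSq (hb : b ≠ 0) (p : ℝ × E) :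
    (1 + ‖p.2‖ + |p.1|) * (1 + |(‖p.2‖ - |p.1|)|) ≤
      (1 + |b|⁻¹) ^ 2 * ‖minkowskiSq b p‖ := by
  have hin := one_add_abs_le_mul_norm hb (‖p.2‖ - p.1)
  have hout := one_add_abs_le_mul_norm (neg_ne_zero.2 hb) (‖p.2‖ + p.1)
  have hprod : (1 + ‖p.2‖ + |p.1|) * (1 + |(‖p.2‖ - |p.1|)|) =
      (1 + |(‖p.2‖ - p.1)|) * (1 + |(‖p.2‖ + p.1)|) := by
    have hx := norm_nonneg p.2
    rcases le_total 0 p.1 with ht | ht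
    · rw [abs_of_nonneg ht, abs_of_nonneg (add_nonneg hx ht)]
      ring
    · rw [abs_of_nonpos ht, sub_neg_eq_add, abs_of_nonneg (sub_nonneg.2 (ht.trans hx))]
      ring
  rw [hprod, minkowskiSq_eq_mul, norm_mul]
  refine (mul_le_mul hin hout (by positivity) (by positivity)).trans_eq ?_
  rw [abs_neg, Complex.ofReal_neg, neg_mul, ← sub_eq_add_neg]
  ring

variable [InnerProductSpace ℝ E]

/-- The Minkowski pairing of `(t - ib, x)` with the direction `v`, half the derivative of
`minkowskiSq` in that direction. -/
def minkowskiPairing (b : ℝ) (v p : ℝ × E) : ℂ :=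
  (inner ℝ p.2 v.2 : ℝ) - (p.1 - b * Complex.I) * v.1

lemma contDiff_minkowskiSq (b : ℝ) : ContDiff ℝ ∞ (minkowskiSq b : ℝ × E → ℂ) :=
  (Complex.ofRealCLM.contDiff.comp (contDiff_snd.norm_sq ℝ)).sub
    (((Complex.ofRealCLM.contDiff.comp contDiff_fst).sub contDiff_const).pow 2)

lemma contDiff_waveKernel (hb : b ≠ 0) (m : ℕ) : ContDiff ℝ ∞ (waveKernel b m : ℝ × E → ℂ) :=
  ((contDiff_minkowskiSq b).inv (minkowskiSq_ne_zero hb)).pow m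

lemma fderiv_minkowskiSq_apply (b : ℝ) (p v : ℝ × E) :
    fderiv ℝ (minkowskiSq b) p v = 2 * minkowskiPairing b v p := by
  have hsq : HasFDerivAt (fun q : ℝ × E => ((‖q.2‖ ^ 2 : ℝ) : ℂ)) _ p :=
    Complex.ofRealCLM.hasFDerivAt.comp p (hasFDerivAt_snd.norm_sq)
  have htime : HasFDerivAt (fun q : ℝ × E => ((q.1 : ℂ) - b * Complex.I) ^ 2) _ p :=
    ((Complex.ofRealCLM.hasFDerivAt.comp p hasFDerivAt_fst).sub_const _).pow 2
  rw [show fderiv ℝ (minkowskiSq b) p = _ from (hsq.sub htime).fderiv]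
  simp [minkowskiPairing]
  ring

lemma hasFDerivAt_minkowskiPairing (b : ℝ) (v p : ℝ × E) :
    ∃ L : ℝ × E →L[ℝ] ℂ, HasFDerivAt (minkowskiPairing b v) L p ∧
      ∀ w, L w = (inner ℝ w.2 v.2 - w.1 * v.1 : ℝ) := by
  have hspace : HasFDerivAt (fun q : ℝ × E => ((inner ℝ q.2 v.2 : ℝ) : ℂ)) _ p :=
    Complex.ofRealCLM.hasFDerivAt.comp p (hasFDerivAt_snd.inner ℝ (hasFDerivAt_const v.2 p))
  have htime : HasFDerivAt (fun q : ℝ × E => ((q.1 : ℂ) - b * Complex.I) * v.1) _ p :=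
    ((Complex.ofRealCLM.hasFDerivAt.comp p hasFDerivAt_fst).sub_const _).mul_const _
  exact ⟨_, hspace.sub htime, fun w => by simp [mul_comm]⟩

lemma fderiv_waveKernel_apply (hb : b ≠ 0) (m : ℕ) (p v : ℝ × E) :
    fderiv ℝ (waveKernel b m) p v =
      -(2 * m) * (waveKernel b (m + 1) p * minkowskiPairing b v p) := by
  have hQ := ((contDiff_minkowskiSq b).differentiable (by simp) p).hasFDerivAt
  have hpow : HasDerivAt (fun z : ℂ => z⁻¹ ^ m) _ (minkowskiSq b p) :=
    (hasDerivAt_inv (minkowskiSq_ne_zero hb p)).fun_pow m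
  have := (hpow.comp_hasFDerivAt p hQ).fderiv
  rw [show fderiv ℝ (waveKernel b m) p = _ from this]
  cases m with
  | zero => simp
  | succ m =>
    simp only [smul_apply, fderiv_minkowskiSq_apply, waveKernel, Nat.add_sub_cancel, smul_eq_mul]
    ring

lemma fderiv_fderiv_waveKernel_apply (hb : b ≠ 0) (m : ℕ) (p v w : ℝ × E) :
    fderiv ℝ (fun q => fderiv ℝ (waveKernel b m) q v) p w =
      -(2 * m) * (waveKernel b (m + 1) p * (inner ℝ w.2 v.2 - w.1 * v.1 : ℝ) +
        -(2 * (m + 1)) * (waveKernel b (m + 2) p *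
          (minkowskiPairing b v p * minkowskiPairing b w p))) := by
  obtain ⟨L, hL, hLw⟩ := hasFDerivAt_minkowskiPairing b v p
  have hK := ((contDiff_waveKernel (E := E) hb (m + 1)).differentiable (by simp) p).hasFDerivAt
  simp only [fderiv_waveKernel_apply hb]
  rw [show fderiv ℝ (fun q => -(2 * m : ℂ) *
    (waveKernel b (m + 1) q * minkowskiPairing b v q)) p = _ from
    ((hK.mul hL).const_mul (-(2 * m : ℂ))).fderiv]
  simp only [smul_apply, add_apply, hLw, fderiv_waveKernel_apply hb, smul_eq_mul]
  push_cast
  ring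

lemma isWaveSolution_waveKernel {ι : Type*} [Fintype ι] [DecidableEq ι] (hb : b ≠ 0) {n : ℕ}
    (hι : Fintype.card ι = 2 * n + 1) :
    IsWaveSolution (waveKernel b n : Spacetime ι → ℂ) where
  contDiff := contDiff_waveKernel hb n
  wave_eq p := by
    have hsq : waveKernel b (n + 2) p * minkowskiSq b p = waveKernel b (n + 1) p := by
      rw [waveKernel, pow_succ, inv_mul_cancel_right₀ (minkowskiSq_ne_zero hb p), waveKernel]
    have hnorm : ∑ j, (p.2 j : ℂ) * p.2 j = ((‖p.2‖ ^ 2 : ℝ) : ℂ) := by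
      rw [EuclideanSpace.real_norm_sq_eq]
      push_cast
      exact Finset.sum_congr rfl fun j _ => (sq _).symm
    have htime : minkowskiPairing b (coordDir none) p = -(p.1 - b * Complex.I) := by
      simp [coordDir, minkowskiPairing]
    have hspace (j : ι) : minkowskiPairing b (coordDir (some j)) p = p.2 j := by
      simp [coordDir, minkowskiPairing, EuclideanSpace.inner_single_right]
    have hmetric (j : ι) : inner ℝ (coordDir (some j)).2 (coordDir (some j)).2 -
        (coordDir (some j)).1 * (coordDir (some j)).1 = (1 : ℝ) := by
      simp [coordDir]
    have hmetric' : inner ℝ (coordDir (none : Option ι)).2 (coordDir (none : Option ι)).2 -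
        (coordDir (none : Option ι)).1 * (coordDir (none : Option ι)).1 = (-1 : ℝ) := by
      simp [coordDir]
    unfold partialDeriv
    simp only [fderiv_fderiv_waveKernel_apply hb, ← Finset.mul_sum, Finset.sum_add_distrib,
      htime, hspace, hmetric, hmetric', hnorm, ← hsq, Finset.sum_const, Finset.card_univ, hι,
      nsmul_eq_mul]
    rw [minkowskiSq]
    push_cast
    ring

lemma tendsto_inv_smul_affine {V : Type*} [NormedAddCommGroup V] [NormedSpace ℝ V] (a c : V) :
    Tendsto (fun w : ℝ => w⁻¹ • (w • a + c)) (Bornology.cobounded ℝ) (𝓝 a) := by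
  have h := tendsto_const_nhds (x := a).add (tendsto_inv₀_cobounded (α := ℝ).smul_const c)
  rw [zero_smul, add_zero] at h
  refine h.congr' ?_
  filter_upwards [Bornology.eventually_ne_cobounded 0] with w hw
  rw [smul_add, inv_smul_smul₀ hw]

lemma hasConeAsymptotics_minkowskiPairing (b : ℝ) (v : ℝ × E) :
    HasConeAsymptotics 1 0 (minkowskiPairing b v) where
  continuous := by unfold minkowskiPairing; fun_prop
  exists_bound := by
    refine ⟨‖v.2‖ + (1 + |b|) * |v.1|, fun p => ?_⟩
    have hinner := abs_real_inner_le_norm p.2 v.2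
    have htime : ‖(p.1 - b * Complex.I : ℂ)‖ ≤ |p.1| + |b| :=
      (norm_sub_le _ _).trans_eq (by simp)
    rw [coneWeight, zpow_one, zpow_zero, mul_one]
    calc ‖minkowskiPairing b v p‖
      _ ≤ ‖p.2‖ * ‖v.2‖ + (|p.1| + |b|) * |v.1| := by
        refine (norm_sub_le _ _).trans ?_
        rw [norm_mul, Complex.norm_real, Complex.norm_real, Real.norm_eq_abs, Real.norm_eq_abs]
        gcongr
      _ ≤ (‖v.2‖ + (1 + |b|) * |v.1|) * (1 + ‖p.2‖ + |p.1|) := by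
        have : 0 ≤ ‖v.2‖ * (1 + |p.1|) + |v.1| * (1 + ‖p.2‖) + |b| * |v.1| * (‖p.2‖ + |p.1|) := by
          positivity
        linarith [norm_nonneg p.2, abs_nonneg v.1]
  exists_limit θ y s _ := by
    refine ⟨_, (tendsto_inv_smul_affine ((inner ℝ θ v.2 - v.1 : ℝ) : ℂ)
      ((s * inner ℝ θ v.2 - inner ℝ y v.2 : ℝ) + b * Complex.I * v.1)).congr fun w => ?_⟩
    simp only [minkowskiPairing, lightRay, inner_sub_left, real_inner_smul_left, zpow_neg, zpow_one,
      Complex.real_smul]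
    push_cast
    ring

lemma minkowskiSq_lightRay (b : ℝ) {θ : E} (hθ : ‖θ‖ = 1) (y : E) (s w : ℝ) :
    minkowskiSq b (lightRay θ y s w) = w • (2 * (s - inner ℝ θ y : ℝ) + 2 * b * Complex.I : ℂ) +
      ((‖s • θ - y‖ ^ 2 : ℝ) + b ^ 2 : ℂ) := by
  simp only [minkowskiSq, lightRay, norm_sub_sq_real, norm_smul, hθ, real_inner_smul_left,
    Real.norm_eq_abs, mul_one, sq_abs, Complex.real_smul]
  push_cast
  linear_combination (-b ^ 2 : ℂ) * Complex.I_sq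

lemma hasConeAsymptotics_inv_minkowskiSq (hb : b ≠ 0) :
    HasConeAsymptotics (-1) (-1) (fun p : ℝ × E => (minkowskiSq b p)⁻¹) where
  continuous := (contDiff_minkowskiSq b).continuous.inv₀ (minkowskiSq_ne_zero hb)
  exists_bound := by
    refine ⟨(1 + |b|⁻¹) ^ 2, fun p => ?_⟩
    have hQ := norm_pos_iff.2 (minkowskiSq_ne_zero hb p)
    rw [coneWeight, zpow_neg_one, zpow_neg_one, ← mul_inv, norm_inv, ← div_eq_mul_inv,
      inv_eq_one_div, div_le_div_iff₀ hQ (by positivity), one_mul]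
    exact one_add_mul_one_add_le_norm_minkowskiSq hb p
  exists_limit θ y s hθ := by
    have hlim : (2 * (s - inner ℝ θ y : ℝ) + 2 * b * Complex.I : ℂ) ≠ 0 := fun h =>
      hb (by simpa using congrArg Complex.im h)
    refine ⟨_, ((tendsto_inv_smul_affine _ ((‖s • θ - y‖ ^ 2 : ℝ) + b ^ 2 : ℂ)).inv₀ hlim).congr
      fun w => ?_⟩
    rw [← minkowskiSq_lightRay b hθ, smul_inv₀, inv_inv, neg_neg, zpow_one]

lemma hasConeAsymptotics_waveKernel (hb : b ≠ 0) (m : ℕ) :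
    HasConeAsymptotics (-m) (-m) (waveKernel b m : ℝ × E → ℂ) := by
  have h : HasConeAsymptotics (m * -1) (m * -1) (waveKernel b m : ℝ × E → ℂ) :=
    (hasConeAsymptotics_inv_minkowskiSq hb).pow m
  simpa only [mul_neg_one] using h

lemma hasConeAsymptotics_fderiv_waveKernel (hb : b ≠ 0) (m : ℕ) (v : ℝ × E) :
    HasConeAsymptotics (-m) (-1) (fun p => fderiv ℝ (waveKernel b m) p v) := by
  have h := (hasConeAsymptotics_waveKernel hb (m + 1)).mul (hasConeAsymptotics_minkowskiPairing b v)
  simp only [fderiv_waveKernel_apply hb]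
  exact ((HasConeAsymptotics.const _).mul h).mono (by simp) (by simp)

lemma hasConeAsymptotics_fderiv_fderiv_waveKernel (hb : b ≠ 0) (m : ℕ) (v w : ℝ × E) :
    HasConeAsymptotics (-m) (-1)
      (fun p => fderiv ℝ (fun q => fderiv ℝ (waveKernel b m) q v) p w) := by
  have hmetric := ((hasConeAsymptotics_waveKernel (E := E) hb (m + 1)).mul
    (.const ((inner ℝ w.2 v.2 - w.1 * v.1 : ℝ) : ℂ))).mono (k' := -m) (l' := -1)
      (by simp) (by simp)
  have hpairing := ((HasConeAsymptotics.const (-(2 * (m + 1) : ℂ))).mul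
    ((hasConeAsymptotics_waveKernel hb (m + 2)).mul ((hasConeAsymptotics_minkowskiPairing b v).mul
      (hasConeAsymptotics_minkowskiPairing b w)))).mono (k' := -m) (l' := -1) (by simp) (by simp)
  have h := (HasConeAsymptotics.const (-(2 * m : ℂ))).mul (hmetric.add hpairing)
  rw [zero_add, zero_add] at h
  simp only [fderiv_fderiv_waveKernel_apply hb]
  exact h

end WaveKernel

section PolarCoordinates

variable {E : Type*} [NormedAddCommGroup E] [NormedSpace ℝ E] [FiniteDimensional ℝ E]
  [Nontrivial E] [MeasurableSpace E] [BorelSpace E] {μ : Measure E} [μ.IsAddHaarMeasure]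
  {f : E → ENNReal}

lemma lintegral_eq_lintegral_toSphere_Ioi (hf : Measurable f) :
    ∫⁻ x, f x ∂μ = ∫⁻ θ : sphere (0 : E) 1, (∫⁻ r in Ioi (0 : ℝ),
      ‖r‖ₑ ^ (Module.finrank ℝ E - 1) * f (r • θ.1)) ∂μ.toSphere := by
  set h := homeomorphUnitSphereProd E
  have hsymm : ∫⁻ x : ({0}ᶜ : Set E), f x ∂(μ.comap Subtype.val) =
      ∫⁻ z, f (h.symm z) ∂(μ.toSphere.prod (Measure.volumeIoiPow (Module.finrank ℝ E - 1))) := by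
    rw [← μ.measurePreserving_homeomorphUnitSphereProd.lintegral_comp_emb h.measurableEmbedding]
    simp only [h, Homeomorph.symm_apply_apply]
  have hfm : Measurable fun z => f (h.symm z) := hf.comp (by fun_prop)
  have hpunctured : ∫⁻ x, f x ∂μ = ∫⁻ x : ({0}ᶜ : Set E), f x ∂(μ.comap Subtype.val) := by
    rw [lintegral_subtype_comap (measurableSet_singleton _).compl, restrict_compl_singleton]
  rw [hpunctured, hsymm, lintegral_prod _ hfm.aemeasurable]
  refine lintegral_congr fun θ => ?_
  rw [Measure.volumeIoiPow, lintegral_withDensity_eq_lintegral_mul _ (by fun_prop)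
    (g := fun r => f (h.symm (θ, r))) (hfm.comp measurable_prodMk_left),
    ← lintegral_subtype_comap measurableSet_Ioi]
  refine lintegral_congr fun r => ?_
  simp [h, homeomorphUnitSphereProd, Real.enorm_of_nonneg r.2.out.le,
    ENNReal.ofReal_pow r.2.out.le]

lemma measurableSet_pos_mul_add (w : ℝ) : MeasurableSet {s : ℝ | 0 < w * (w + s)} :=
  measurableSet_lt measurable_const (by fun_prop)

lemma lintegral_eq_lintegral_toSphere_shift (hf : Measurable f) {w : ℝ} (hw : w ≠ 0) :
    ∫⁻ x, f x ∂μ = ∫⁻ θ : sphere (0 : E) 1, (∫⁻ s in {s : ℝ | 0 < w * (w + s)},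
      ‖w + s‖ₑ ^ (Module.finrank ℝ E - 1) * f ((w + s) • θ.1)) ∂μ.toSphere := by
  rcases hw.lt_or_gt with hw | hw
  · have hpre : {s : ℝ | 0 < w * (w + s)} = (fun s => -w - s) ⁻¹' Ioi 0 := by
      ext s
      rw [mem_ofPred_eq, ← neg_mul_neg, mul_pos_iff_of_pos_left (neg_pos.2 hw), neg_add']
      rfl
    rw [← lintegral_neg_eq_self,
      lintegral_eq_lintegral_toSphere_Ioi (f := fun x => f (-x)) (hf.comp measurable_neg)]
    refine lintegral_congr fun θ => ?_
    rw [hpre, ← (Measure.measurePreserving_sub_left volume (-w)).setLIntegral_comp_preimage_emb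
      (MeasurableEquiv.subLeft (-w)).measurableEmbedding]
    refine lintegral_congr fun s => ?_
    simp only [← neg_add', enorm_neg, neg_smul, neg_neg]
  · have hpre : {s : ℝ | 0 < w * (w + s)} = (fun s => w + s) ⁻¹' Ioi 0 := by
      ext s
      simp only [mem_ofPred_eq, mem_preimage, mem_Ioi, mul_pos_iff_of_pos_left hw]
    rw [lintegral_eq_lintegral_toSphere_Ioi hf]
    refine lintegral_congr fun θ => ?_
    rw [hpre, ← (measurePreserving_add_left volume w).setLIntegral_comp_preimage_emb
      (MeasurableEquiv.addLeft w).measurableEmbedding]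

lemma lintegral_eq_setLIntegral_cone (hf : Measurable f) {w : ℝ} (hw : w ≠ 0) :
    ∫⁻ x, f x ∂μ = ∫⁻ z in Prod.snd ⁻¹' {s : ℝ | 0 < w * (w + s)},
      ‖w + z.2‖ₑ ^ (Module.finrank ℝ E - 1) * f ((w + z.2) • z.1.1)
        ∂(μ.toSphere.prod volume) := by
  rw [lintegral_eq_lintegral_toSphere_shift hf hw, ← univ_prod, setLIntegral_prod,
    Measure.restrict_univ]
  exact ((by fun_prop : Measurable fun z : sphere (0 : E) 1 × ℝ =>
    ‖w + z.2‖ₑ ^ (Module.finrank ℝ E - 1)).mul (hf.comp (by fun_prop))).aemeasurable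

lemma pos_mul_add_and_abs_le_abs_add_iff {w : ℝ} (hw : w ≠ 0) (s : ℝ) :
    0 < w * (w + s) ∧ |w| ≤ |w + s| ↔ 0 ≤ w * s := by
  have hw2 : 0 < w * w := mul_self_pos.2 hw
  rw [← sq_le_sq]
  refine ⟨fun ⟨hpos, hle⟩ => ?_, fun h => ⟨by nlinarith, by nlinarith [sq_nonneg s]⟩⟩
  by_contra! h
  nlinarith [hpos, hle, sq_nonneg s]

lemma setLIntegral_exterior_eq_setLIntegral_cone (hf : Measurable f) {w : ℝ} (hw : w ≠ 0) :
    ∫⁻ x in {x | |w| ≤ ‖x‖}, f x ∂μ = ∫⁻ z in Prod.snd ⁻¹' {s : ℝ | 0 ≤ w * s},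
      ‖w + z.2‖ₑ ^ (Module.finrank ℝ E - 1) * f ((w + z.2) • z.1.1)
        ∂(μ.toSphere.prod volume) := by
  have hext : MeasurableSet {x : E | |w| ≤ ‖x‖} := measurableSet_le measurable_const measurable_norm
  have hsnd {S : Set ℝ} (hS : MeasurableSet S) :
    MeasurableSet (Prod.snd ⁻¹' S : Set (sphere (0 : E) 1 × ℝ)) := measurable_snd hS
  rw [← lintegral_indicator hext, lintegral_eq_setLIntegral_cone (hf.indicator hext) hw,
    ← lintegral_indicator (hsnd (measurableSet_pos_mul_add w)),
    ← lintegral_indicator (hsnd (measurableSet_le measurable_const (by fun_prop)))]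
  refine lintegral_congr fun z => ?_
  have hnorm : ‖(w + z.2) • z.1.1‖ = |w + z.2| := by simp [norm_smul]
  by_cases hpos : 0 < w * (w + z.2) <;> by_cases hle : |w| ≤ |w + z.2| <;>
    simp [indicator, hnorm, hpos, hle, ← pos_mul_add_and_abs_le_abs_add_iff hw]

end PolarCoordinates

section RadiationField

variable {E G : Type*} [NormedAddCommGroup E] [NormedSpace ℝ E] [NormedAddCommGroup G]
  [NormedSpace ℝ G] {n : ℕ} {k l : ℤ} {F : ℝ × E → G}

/-- The slice of `F` at time `w` in the coordinates `x = (w + s) θ` adapted to the light cone,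
rescaled by `(w + s)ⁿ`. Its limits for `w → ±∞` are the radiation fields of `F`. -/
def rescaledSlice (n : ℕ) (F : ℝ × E → G) (w : ℝ) (z : sphere (0 : E) 1 × ℝ) : G :=
  (w + z.2) ^ n • F (w, (w + z.2) • z.1.1)

lemma enorm_rescaledSlice_sq (n : ℕ) (F : ℝ × E → G) (w : ℝ) (z : sphere (0 : E) 1 × ℝ) :
    ‖rescaledSlice n F w z‖ₑ ^ 2 =
      ‖w + z.2‖ₑ ^ (2 * n) * ‖F (w, (w + z.2) • z.1.1)‖ₑ ^ 2 := by
  rw [rescaledSlice, enorm_smul, enorm_pow, mul_pow, ← pow_mul, mul_comm n]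

namespace HasConeAsymptotics

lemma exists_tendsto_rescaledSlice (hF : HasConeAsymptotics (-n) l F) (z : sphere (0 : E) 1 × ℝ) :
    ∃ c, Tendsto (fun w => rescaledSlice n F w z) (Bornology.cobounded ℝ) (𝓝 c) := by
  obtain ⟨c, hc⟩ := hF.exists_limit z.1 0 z.2 (norm_eq_of_mem_sphere z.1)
  have hratio : Tendsto (fun w : ℝ => 1 + z.2 * w⁻¹) (Bornology.cobounded ℝ) (𝓝 (1 + z.2 * 0)) :=
    tendsto_const_nhds.add (tendsto_const_nhds.mul tendsto_inv₀_cobounded)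
  refine ⟨_, ((hratio.pow n).smul hc).congr' ?_⟩
  filter_upwards [Bornology.eventually_ne_cobounded 0] with w hw
  rw [neg_neg, zpow_natCast, smul_smul, ← mul_pow, lightRay, sub_zero, rescaledSlice, add_mul,
    one_mul, inv_mul_cancel_right₀ hw]

lemma exists_enorm_rescaledSlice_sq_le (hF : HasConeAsymptotics (-n) (-1) F) :
    ∃ C : ℝ, ∀ (w : ℝ) (z : sphere (0 : E) 1 × ℝ), 0 < w * (w + z.2) →
      ‖rescaledSlice n F w z‖ₑ ^ 2 ≤ ENNReal.ofReal (C * (1 + z.2 ^ 2)⁻¹) := by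
  obtain ⟨C, hC, hbound⟩ := hF.exists_nonneg_bound
  refine ⟨C ^ 2, fun w z hpos => ?_⟩
  have hnorm : ‖(w + z.2) • z.1.1‖ = |w + z.2| := by simp [norm_smul]
  have hdist : |(|w + z.2| - |w|)| = |z.2| := by
    rcases pos_and_pos_or_neg_and_neg_of_mul_pos hpos with ⟨hw, hws⟩ | ⟨hw, hws⟩
    · rw [abs_of_pos hw, abs_of_pos hws, add_sub_cancel_left]
    · rw [abs_of_neg hw, abs_of_neg hws, neg_sub_neg, sub_add_cancel_left, abs_neg]
  have hratio : |w + z.2| ^ n * (1 + |w + z.2| + |w|) ^ (-n : ℤ) ≤ 1 := by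
    rw [zpow_neg, zpow_natCast, ← div_eq_mul_inv]
    refine div_le_one_of_le₀ (pow_le_pow_left₀ (abs_nonneg _) ?_ n) (by positivity)
    linarith [abs_nonneg w]
  have hslice : ‖rescaledSlice n F w z‖ ≤ C * (1 + |z.2|)⁻¹ := by
    rw [rescaledSlice, norm_smul, norm_pow, Real.norm_eq_abs]
    calc |w + z.2| ^ n * ‖F (w, (w + z.2) • z.1.1)‖
      _ ≤ |w + z.2| ^ n * (C * ((1 + |w + z.2| + |w|) ^ (-n : ℤ) * (1 + |z.2|) ^ (-1 : ℤ))) := by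
        have := hbound (w, (w + z.2) • z.1.1)
        simp only [coneWeight, hnorm, hdist] at this
        gcongr
      _ = |w + z.2| ^ n * (1 + |w + z.2| + |w|) ^ (-n : ℤ) * (C * (1 + |z.2|)⁻¹) := by
        rw [zpow_neg_one]
        ring
      _ ≤ C * (1 + |z.2|)⁻¹ := mul_le_of_le_one_left (by positivity) hratio
  rw [← ofReal_norm, ← ENNReal.ofReal_pow (norm_nonneg _)]
  refine ENNReal.ofReal_le_ofReal ((pow_le_pow_left₀ (norm_nonneg _) hslice 2).trans ?_)
  rw [mul_pow, inv_pow]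
  gcongr
  nlinarith [abs_nonneg z.2, sq_abs z.2]

variable [MeasurableSpace E] [BorelSpace E]

lemma measurable_enorm_slice_sq (hF : HasConeAsymptotics k l F) (w : ℝ) :
    Measurable fun x => ‖F (w, x)‖ₑ ^ 2 :=
  ((ENNReal.continuous_pow 2).comp (hF.continuous.comp (by fun_prop)).enorm).measurable

variable [FiniteDimensional ℝ E] {μ : Measure E} [μ.IsAddHaarMeasure]

lemma tendsto_setLIntegral_rescaledSlice (hF : HasConeAsymptotics (-n) (-1) F)
    {L : sphere (0 : E) 1 × ℝ → G}
    (hL : ∀ z, Tendsto (fun w => rescaledSlice n F w z) (Bornology.cobounded ℝ) (𝓝 (L z)))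
    {f : Filter ℝ} [f.IsCountablyGenerated] (hf : f ≤ Bornology.cobounded ℝ)
    {S : ℝ → Set ℝ} {J : Set ℝ} (hS : ∀ w, MeasurableSet (S w)) (hJ : MeasurableSet J)
    (hpos : ∀ᶠ w in f, S w ⊆ {s | 0 < w * (w + s)}) (hSJ : ∀ s, ∀ᶠ w in f, s ∈ S w ↔ s ∈ J) :
    Tendsto (fun w => ∫⁻ z in Prod.snd ⁻¹' S w, ‖rescaledSlice n F w z‖ₑ ^ 2
        ∂(μ.toSphere.prod volume)) f
      (𝓝 (∫⁻ z in Prod.snd ⁻¹' J, ‖L z‖ₑ ^ 2 ∂(μ.toSphere.prod volume))) := by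
  obtain ⟨C, hC⟩ := hF.exists_enorm_rescaledSlice_sq_le
  have hmeas (w : ℝ) : Measurable fun z => ‖rescaledSlice n F w z‖ₑ ^ 2 := by
    have hcont : Continuous (rescaledSlice n F w) := by
      have := hF.continuous
      unfold rescaledSlice
      fun_prop
    exact (ENNReal.continuous_pow 2).measurable.comp hcont.enorm.measurable
  have hdom : Integrable (fun z : sphere (0 : E) 1 × ℝ => C * (1 + z.2 ^ 2)⁻¹)
      (μ.toSphere.prod volume) := (integrable_inv_one_add_sq.comp_snd _).const_mul C
  simp only [← lintegral_indicator (measurable_snd (hS _)),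
    ← lintegral_indicator (measurable_snd hJ)]
  refine tendsto_lintegral_filter_of_dominated_convergence _
    (.of_forall fun w => (hmeas w).indicator (measurable_snd (hS w))) ?_
    hdom.lintegral_lt_top.ne (.of_forall fun z => ?_)
  · filter_upwards [hpos] with w hw
    refine .of_forall fun z => indicator_le (fun z hz => hC w z (hw hz)) z
  · have hlim : Tendsto (fun w => ‖rescaledSlice n F w z‖ₑ ^ 2) f (𝓝 (‖L z‖ₑ ^ 2)) :=
      ((ENNReal.continuous_pow 2).tendsto _).comp ((hL z).enorm.mono_left hf)
    by_cases hz : z.2 ∈ J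
    · rw [indicator_of_mem (by exact hz)]
      refine hlim.congr' ?_
      filter_upwards [hSJ z.2] with w hw
      rw [indicator_of_mem (by exact hw.2 hz)]
    · rw [indicator_of_notMem (by exact hz)]
      refine tendsto_const_nhds.congr' ?_
      filter_upwards [hSJ z.2] with w hw
      rw [indicator_of_notMem (by exact fun h => hz (hw.1 h))]

variable [Nontrivial E]

lemma lintegral_eq_setLIntegral_rescaledSlice (hF : HasConeAsymptotics k l F)
    (hn : Module.finrank ℝ E = 2 * n + 1) {w : ℝ} (hw : w ≠ 0) :
    ∫⁻ x, ‖F (w, x)‖ₑ ^ 2 ∂μ = ∫⁻ z in Prod.snd ⁻¹' {s | 0 < w * (w + s)},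
      ‖rescaledSlice n F w z‖ₑ ^ 2 ∂(μ.toSphere.prod volume) := by
  simp only [lintegral_eq_setLIntegral_cone (hF.measurable_enorm_slice_sq w) hw,
    enorm_rescaledSlice_sq, hn, Nat.add_sub_cancel]

lemma setLIntegral_exterior_eq_setLIntegral_rescaledSlice (hF : HasConeAsymptotics k l F)
    (hn : Module.finrank ℝ E = 2 * n + 1) {w : ℝ} (hw : w ≠ 0) :
    ∫⁻ x in {x | |w| ≤ ‖x‖}, ‖F (w, x)‖ₑ ^ 2 ∂μ = ∫⁻ z in Prod.snd ⁻¹' {s | 0 ≤ w * s},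
      ‖rescaledSlice n F w z‖ₑ ^ 2 ∂(μ.toSphere.prod volume) := by
  simp only [setLIntegral_exterior_eq_setLIntegral_cone (hF.measurable_enorm_slice_sq w) hw,
    enorm_rescaledSlice_sq, hn, Nat.add_sub_cancel]

variable {L : sphere (0 : E) 1 × ℝ → G}

lemma tendsto_lintegral_atTop (hF : HasConeAsymptotics (-n) (-1) F)
    (hn : Module.finrank ℝ E = 2 * n + 1)
    (hL : ∀ z, Tendsto (fun w => rescaledSlice n F w z) (Bornology.cobounded ℝ) (𝓝 (L z))) :
    Tendsto (fun w => ∫⁻ x, ‖F (w, x)‖ₑ ^ 2 ∂μ) atTop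
      (𝓝 (∫⁻ z, ‖L z‖ₑ ^ 2 ∂(μ.toSphere.prod volume))) := by
  have h := hF.tendsto_setLIntegral_rescaledSlice (μ := μ) hL IsOrderBornology.atTop_le_cobounded
    measurableSet_pos_mul_add MeasurableSet.univ (.of_forall fun w => subset_rfl) fun s => by
      filter_upwards [eventually_gt_atTop 0, eventually_gt_atTop (-s)] with w hw hws
      simp [hw, neg_lt_iff_pos_add.1 hws]
  rw [preimage_univ, Measure.restrict_univ] at h
  refine h.congr' ?_
  filter_upwards [eventually_ne_atTop 0] with w hw
  rw [hF.lintegral_eq_setLIntegral_rescaledSlice hn hw]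

lemma tendsto_setLIntegral_exterior (hF : HasConeAsymptotics (-n) (-1) F)
    (hn : Module.finrank ℝ E = 2 * n + 1)
    (hL : ∀ z, Tendsto (fun w => rescaledSlice n F w z) (Bornology.cobounded ℝ) (𝓝 (L z)))
    {f : Filter ℝ} [f.IsCountablyGenerated] (hf : f ≤ Bornology.cobounded ℝ)
    {J : Set ℝ} (hJ : MeasurableSet J) (hsign : ∀ᶠ w in f, ∀ s, 0 ≤ w * s ↔ s ∈ J) :
    Tendsto (fun w => ∫⁻ x in {x | |w| ≤ ‖x‖}, ‖F (w, x)‖ₑ ^ 2 ∂μ) f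
      (𝓝 (∫⁻ z in Prod.snd ⁻¹' J, ‖L z‖ₑ ^ 2 ∂(μ.toSphere.prod volume))) := by
  have hne : ∀ᶠ w in f, w ≠ 0 := hf (Bornology.eventually_ne_cobounded 0)
  refine (hF.tendsto_setLIntegral_rescaledSlice hL hf (S := fun w => {s | 0 ≤ w * s})
    (fun w => measurableSet_le measurable_const (by fun_prop)) hJ ?_
    fun s => hsign.mono fun w hw => hw s).congr' ?_
  · filter_upwards [hne] with w hw s hs
    exact ((pos_mul_add_and_abs_le_abs_add_iff hw s).2 hs).1
  · filter_upwards [hne] with w hw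
    rw [hF.setLIntegral_exterior_eq_setLIntegral_rescaledSlice hn hw]

theorem exists_tendsto_setLIntegral_exterior (hF : HasConeAsymptotics (-n) (-1) F)
    (hn : Module.finrank ℝ E = 2 * n + 1) :
    ∃ A B : ENNReal,
      Tendsto (fun w => ∫⁻ x in {x | |w| ≤ ‖x‖}, ‖F (w, x)‖ₑ ^ 2 ∂μ) atTop (𝓝 A) ∧
      Tendsto (fun w => ∫⁻ x in {x | |w| ≤ ‖x‖}, ‖F (w, x)‖ₑ ^ 2 ∂μ) atBot (𝓝 B) ∧
      Tendsto (fun w => ∫⁻ x, ‖F (w, x)‖ₑ ^ 2 ∂μ) atTop (𝓝 (A + B)) := by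
  choose L hL using hF.exists_tendsto_rescaledSlice
  have hsplit : ∫⁻ z in Prod.snd ⁻¹' Ici 0, ‖L z‖ₑ ^ 2 ∂(μ.toSphere.prod volume) +
      ∫⁻ z in Prod.snd ⁻¹' Iic 0, ‖L z‖ₑ ^ 2 ∂(μ.toSphere.prod volume) =
      ∫⁻ z, ‖L z‖ₑ ^ 2 ∂(μ.toSphere.prod volume) := by
    rw [← setLIntegral_congr (Measure.quasiMeasurePreserving_snd.preimage_ae_eq
      (Iio_ae_eq_Iic (a := (0 : ℝ)))), ← compl_Ici, preimage_compl,
      lintegral_add_compl _ (measurable_snd measurableSet_Ici)]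
  refine ⟨_, _,
    hF.tendsto_setLIntegral_exterior hn hL IsOrderBornology.atTop_le_cobounded measurableSet_Ici ?_,
    hF.tendsto_setLIntegral_exterior hn hL IsOrderBornology.atBot_le_cobounded measurableSet_Iic ?_,
    hsplit ▸ hF.tendsto_lintegral_atTop hn hL⟩
  · filter_upwards [eventually_gt_atTop 0] with w hw s
    exact mul_nonneg_iff_of_pos_left hw
  · filter_upwards [eventually_lt_atBot 0] with w hw s
    rw [← neg_mul_neg, mul_nonneg_iff_of_pos_left (neg_pos.2 hw), neg_nonneg, mem_Iic]

end HasConeAsymptotics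

end RadiationField

section PoissonKernel

open Convolution ContinuousLinearMap

variable {E F : Type*} [NormedAddCommGroup E] [MeasureSpace E] {n : ℕ} {b : ℝ}

/-- The constant `cₙ` which normalises the integral of the Poisson kernel to `1`. -/
def poissonConst (E : Type*) [NormedAddCommGroup E] [MeasureSpace E] (n : ℕ) : ℝ :=
  (∫ z : E, ((‖z‖ ^ 2 + 1) ^ (n + 1))⁻¹)⁻¹

/-- The Poisson kernel `cₙ b (‖x‖² + b²)⁻⁽ⁿ⁺¹⁾` of a space of dimension `2n + 1`, an approximate
identity as `b → 0⁺` with which the initial data are regularised. -/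
def halfSpacePoissonKernel (n : ℕ) (b : ℝ) (x : E) : ℝ :=
  poissonConst E n * (b * ((‖x‖ ^ 2 + b ^ 2) ^ (n + 1))⁻¹)

lemma poissonConst_nonneg (E : Type*) [NormedAddCommGroup E] [MeasureSpace E] (n : ℕ) :
    0 ≤ poissonConst E n :=
  inv_nonneg.2 (integral_nonneg fun z => by positivity)

lemma halfSpacePoissonKernel_nonneg (n : ℕ) (hb : 0 ≤ b) (x : E) :
    0 ≤ halfSpacePoissonKernel n b x := by
  have := poissonConst_nonneg E n
  unfold halfSpacePoissonKernel
  positivity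

lemma continuous_halfSpacePoissonKernel (n : ℕ) (hb : b ≠ 0) :
    Continuous (halfSpacePoissonKernel n b : E → ℝ) := by
  unfold halfSpacePoissonKernel
  exact continuous_const.mul (continuous_const.mul
    (Continuous.inv₀ (by fun_prop) fun x => by positivity))

lemma halfSpacePoissonKernel_sub_le {x y : E} {R : ℝ} (hb : 0 < b) (hb1 : b ≤ 1) (hy : ‖y‖ ≤ R)
    (hx : 2 * R + 1 ≤ ‖x‖) :
    halfSpacePoissonKernel n b (x - y) ≤ 8 ^ (n + 1) * halfSpacePoissonKernel n 1 x := by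
  have hxy : (‖x‖ ^ 2 + 1) / 8 ≤ ‖x - y‖ ^ 2 + b ^ 2 := by
    have := norm_sub_norm_le x y
    nlinarith [norm_nonneg y]
  have hc := poissonConst_nonneg E n
  calc halfSpacePoissonKernel n b (x - y)
    _ ≤ poissonConst E n * (1 * (((‖x‖ ^ 2 + 1) / 8) ^ (n + 1))⁻¹) := by
      unfold halfSpacePoissonKernel
      gcongr
    _ = 8 ^ (n + 1) * halfSpacePoissonKernel n 1 x := by
      simp only [halfSpacePoissonKernel, div_pow, inv_div, one_pow]
      ring

lemma tendsto_norm_pow_mul_halfSpacePoissonKernel (n : ℕ) :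
    Tendsto (fun x : E => ‖x‖ ^ (2 * n + 1) * halfSpacePoissonKernel n 1 x) (Bornology.cobounded E)
      (𝓝 0) := by
  set c := poissonConst E n
  have hc : 0 ≤ c := poissonConst_nonneg E n
  have hinv : Tendsto (fun x : E => c * ‖x‖⁻¹) (Bornology.cobounded E) (𝓝 (c * 0)) :=
    (tendsto_inv_atTop_zero.comp tendsto_norm_cobounded_atTop).const_mul c
  rw [mul_zero] at hinv
  refine squeeze_zero' (.of_forall fun x => mul_nonneg (by positivity)
    (halfSpacePoissonKernel_nonneg n zero_le_one x)) ?_ hinv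
  filter_upwards [Bornology.eventually_ne_cobounded 0] with x hx
  have : 0 < ‖x‖ := norm_pos_iff.2 hx
  calc ‖x‖ ^ (2 * n + 1) * halfSpacePoissonKernel n 1 x
    _ = c * (‖x‖ ^ (2 * n + 1) * ((‖x‖ ^ 2 + 1) ^ (n + 1))⁻¹) := by
      simp only [halfSpacePoissonKernel, one_pow]
      ring
    _ ≤ c * (‖x‖ ^ (2 * n + 1) * ((‖x‖ ^ 2) ^ (n + 1))⁻¹) := by
      gcongr
      linarith
    _ = c * ‖x‖⁻¹ := by
      field_simp
      ring

variable [NormedSpace ℝ E]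

lemma halfSpacePoissonKernel_eq_pow_mul_halfSpacePoissonKernel_one (n : ℕ) (hb : 0 < b) (x : E) :
    halfSpacePoissonKernel n b x = b⁻¹ ^ (2 * n + 1) * halfSpacePoissonKernel n 1 (b⁻¹ • x) := by
  have hscale : ‖x‖ ^ 2 + b ^ 2 = b ^ 2 * (‖b⁻¹ • x‖ ^ 2 + 1) := by
    rw [norm_smul, norm_inv, Real.norm_of_nonneg hb.le]
    field_simp
  have hpow : b * ((b ^ 2) ^ (n + 1))⁻¹ = b⁻¹ ^ (2 * n + 1) := by
    rw [inv_pow]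
    field_simp
    ring
  simp only [halfSpacePoissonKernel, hscale, mul_pow, mul_inv, one_pow, ← hpow]
  ring

variable [FiniteDimensional ℝ E] [BorelSpace E] [(volume : Measure E).IsAddHaarMeasure]

lemma integrable_inv_norm_sq_add_one_pow (hn : Module.finrank ℝ E = 2 * n + 1) :
    Integrable fun z : E => ((‖z‖ ^ 2 + 1) ^ (n + 1))⁻¹ := by
  refine (integrable_rpow_neg_one_add_norm_sq (μ := volume) (r := 2 * (n + 1 : ℕ))
    (by rw [hn]; norm_cast; lia)).congr (.of_forall fun z => ?_)
  beta_reduce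
  rw [neg_div, mul_div_cancel_left₀ _ two_ne_zero, Real.rpow_neg (by positivity),
    Real.rpow_natCast, add_comm]

lemma poissonConst_pos (hn : Module.finrank ℝ E = 2 * n + 1) : 0 < poissonConst E n := by
  rw [poissonConst, inv_pos, integral_pos_iff_support_of_nonneg (fun z => by positivity)
    (integrable_inv_norm_sq_add_one_pow hn), Function.support_eq_univ fun z => by positivity]
  exact isOpen_univ.measure_pos _ univ_nonempty

lemma integral_halfSpacePoissonKernel (hn : Module.finrank ℝ E = 2 * n + 1) (hb : 0 < b) :
    ∫ x : E, halfSpacePoissonKernel n b x = 1 := by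
  have hone : ∫ x : E, halfSpacePoissonKernel n 1 x = 1 := by
    simp only [halfSpacePoissonKernel, poissonConst, one_pow, one_mul, integral_const_mul]
    exact inv_mul_cancel₀ (inv_pos.1 (poissonConst_pos hn)).ne'
  simp only [halfSpacePoissonKernel_eq_pow_mul_halfSpacePoissonKernel_one n hb, integral_const_mul]
  rw [Measure.integral_comp_smul, hone, hn, inv_pow, inv_inv, abs_of_pos (by positivity)]
  simp [hb.ne']

lemma integrable_halfSpacePoissonKernel (hn : Module.finrank ℝ E = 2 * n + 1) (hb : 0 < b) :
    Integrable (halfSpacePoissonKernel n b : E → ℝ) :=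
  integrable_of_integral_eq_one (integral_halfSpacePoissonKernel hn hb)

lemma memLp_two_halfSpacePoissonKernel (hn : Module.finrank ℝ E = 2 * n + 1) (hb : 0 < b) :
    MemLp (halfSpacePoissonKernel n b : E → ℝ) 2 := by
  have hcont := (continuous_halfSpacePoissonKernel (E := E) n hb.ne').aestronglyMeasurable
    (μ := volume)
  rw [memLp_two_iff_integrable_sq hcont]
  simp only [pow_two]
  refine (integrable_halfSpacePoissonKernel hn hb).bdd_mul (c := halfSpacePoissonKernel n b (0 : E))
    hcont (.of_forall fun x => ?_)
  rw [Real.norm_of_nonneg (halfSpacePoissonKernel_nonneg n hb.le x)]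
  have hc := poissonConst_nonneg E n
  unfold halfSpacePoissonKernel
  gcongr
  simp

variable [NormedAddCommGroup F] [NormedSpace ℝ F] {g : E → F}

lemma norm_convolution_halfSpacePoissonKernel_le (hn : Module.finrank ℝ E = 2 * n + 1) (hb : 0 < b)
    {M : ℝ} (hM : ∀ y, ‖g y‖ ≤ M) (x : E) :
    ‖(halfSpacePoissonKernel n b ⋆[lsmul ℝ ℝ, volume] g) x‖ ≤ M := by
  rw [convolution_lsmul]
  calc ‖∫ y, halfSpacePoissonKernel n b y • g (x - y)‖
    _ ≤ ∫ y : E, halfSpacePoissonKernel n b y * M := by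
      refine norm_integral_le_of_norm_le ((integrable_halfSpacePoissonKernel hn hb).mul_const M)
        (.of_forall fun y => ?_)
      have hnonneg := halfSpacePoissonKernel_nonneg n hb.le y
      rw [norm_smul, Real.norm_of_nonneg hnonneg]
      exact mul_le_mul_of_nonneg_left (hM _) hnonneg
    _ = M := by rw [integral_mul_const, integral_halfSpacePoissonKernel hn hb, one_mul]

lemma norm_convolution_halfSpacePoissonKernel_le_of_le_norm (hg : Continuous g)
    (hgs : HasCompactSupport g) {R : ℝ} (hR : ∀ y ∈ tsupport g, ‖y‖ ≤ R) (hb : 0 < b) (hb1 : b ≤ 1)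
    {x : E} (hx : 2 * R + 1 ≤ ‖x‖) :
    ‖(halfSpacePoissonKernel n b ⋆[lsmul ℝ ℝ, volume] g) x‖ ≤
      8 ^ (n + 1) * halfSpacePoissonKernel n 1 x * ∫ y, ‖g y‖ := by
  rw [convolution_lsmul_swap, ← integral_const_mul]
  refine norm_integral_le_of_norm_le
    ((hg.integrable_of_hasCompactSupport hgs).norm.const_mul _) (.of_forall fun y => ?_)
  rw [norm_smul, Real.norm_of_nonneg (halfSpacePoissonKernel_nonneg n hb.le _)]
  by_cases hy : y ∈ tsupport g
  · exact mul_le_mul_of_nonneg_right (halfSpacePoissonKernel_sub_le hb hb1 (hR y hy) hx)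
      (norm_nonneg _)
  · simp [image_eq_zero_of_notMem_tsupport hy]

lemma exists_norm_convolution_halfSpacePoissonKernel_le (hn : Module.finrank ℝ E = 2 * n + 1)
    (hg : Continuous g) (hgs : HasCompactSupport g) :
    ∃ K, ∀ b ∈ Ioc (0 : ℝ) 1, ∀ x,
      ‖(halfSpacePoissonKernel n b ⋆[lsmul ℝ ℝ, volume] g) x‖ ≤
        K * halfSpacePoissonKernel n 1 x := by
  obtain ⟨M, hM⟩ := hgs.exists_bound_of_continuous hg
  obtain ⟨R, hR⟩ := hgs.isBounded.exists_norm_le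
  have hM0 : 0 ≤ M := (norm_nonneg _).trans (hM 0)
  set c := poissonConst E n
  have hc : 0 < c := poissonConst_pos hn
  set m := c * (((2 * R + 1) ^ 2 + 1) ^ (n + 1))⁻¹
  have hm : 0 < m := by positivity
  have : 0 ≤ ∫ y, ‖g y‖ := integral_nonneg fun y => norm_nonneg _
  refine ⟨M / m + 8 ^ (n + 1) * ∫ y, ‖g y‖, fun b hb x => ?_⟩
  have hP := halfSpacePoissonKernel_nonneg n zero_le_one x
  rw [add_mul]
  rcases le_total ‖x‖ (2 * R + 1) with hx | hx
  · have hmP : m ≤ halfSpacePoissonKernel n 1 x := by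
      simp only [m, c, halfSpacePoissonKernel, one_pow, one_mul]
      gcongr
    calc ‖(halfSpacePoissonKernel n b ⋆[lsmul ℝ ℝ, volume] g) x‖
      _ ≤ M := norm_convolution_halfSpacePoissonKernel_le hn hb.1 hM x
      _ ≤ M / m * halfSpacePoissonKernel n 1 x := by
        rw [div_mul_eq_mul_div, le_div_iff₀ hm]
        gcongr
      _ ≤ _ := le_add_of_nonneg_right (by positivity)
  · refine (norm_convolution_halfSpacePoissonKernel_le_of_le_norm hg hgs hR hb.1 hb.2 hx).trans ?_
    rw [mul_right_comm]
    exact le_add_of_nonneg_left (by positivity)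

variable [CompleteSpace F]

lemma tendsto_convolution_halfSpacePoissonKernel (hn : Module.finrank ℝ E = 2 * n + 1)
    (hg : Continuous g) (hgs : HasCompactSupport g) (x : E) :
    Tendsto (fun b => (halfSpacePoissonKernel n b ⋆[lsmul ℝ ℝ, volume] g) x) (𝓝[>] 0)
      (𝓝 (g x)) := by
  have hlim := tendsto_integral_comp_smul_smul_of_integrable' (μ := volume)
    (φ := halfSpacePoissonKernel n 1) (halfSpacePoissonKernel_nonneg n zero_le_one)
    (integral_halfSpacePoissonKernel hn one_pos)
    (hn ▸ tendsto_norm_pow_mul_halfSpacePoissonKernel n)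
    (hg.integrable_of_hasCompactSupport hgs) hg.continuousAt (x₀ := x)
  refine (hlim.comp tendsto_inv_nhdsGT_zero).congr' ?_
  filter_upwards [self_mem_nhdsWithin] with b hb
  simp only [Function.comp_apply, convolution_lsmul_swap, hn,
    halfSpacePoissonKernel_eq_pow_mul_halfSpacePoissonKernel_one n hb]

lemma tendsto_lintegral_enorm_sub_convolution_halfSpacePoissonKernel_sq
    (hn : Module.finrank ℝ E = 2 * n + 1) (hg : Continuous g) (hgs : HasCompactSupport g) :
    Tendsto (fun b => ∫⁻ x, ‖g x - (halfSpacePoissonKernel n b ⋆[lsmul ℝ ℝ, volume] g) x‖ₑ ^ 2)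
      (𝓝[>] 0) (𝓝 0) := by
  obtain ⟨K, hK⟩ := exists_norm_convolution_halfSpacePoissonKernel_le hn hg hgs
  have hdom : MemLp (fun x => ‖g x‖ + K * halfSpacePoissonKernel n 1 x) 2 :=
    (hg.memLp_of_hasCompactSupport hgs).norm.add
      ((memLp_two_halfSpacePoissonKernel hn one_pos).const_mul K)
  rw [← lintegral_zero (μ := (volume : Measure E))]
  refine tendsto_lintegral_filter_of_dominated_convergence
    (fun x => ENNReal.ofReal ((‖g x‖ + K * halfSpacePoissonKernel n 1 x) ^ 2)) ?_ ?_
    hdom.integrable_sq.lintegral_lt_top.ne (.of_forall fun x => ?_)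
  · filter_upwards [self_mem_nhdsWithin] with b hb
    have hconv : Continuous (halfSpacePoissonKernel n b ⋆[lsmul ℝ ℝ, volume] g) :=
      hgs.continuous_convolution_right _
        (integrable_halfSpacePoissonKernel hn hb).locallyIntegrable hg
    exact ((ENNReal.continuous_pow 2).comp (hg.sub hconv).enorm).measurable
  · filter_upwards [Ioc_mem_nhdsGT one_pos] with b hb
    refine .of_forall fun x => ?_
    rw [← ofReal_norm, ← ENNReal.ofReal_pow (norm_nonneg _)]
    have := (norm_sub_le (g x) _).trans (add_le_add_right (hK b hb x) ‖g x‖)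
    gcongr
  · have hsub := tendsto_const_nhds (x := g x).sub
      (tendsto_convolution_halfSpacePoissonKernel hn hg hgs x)
    simpa [Function.comp_def] using ((ENNReal.continuous_pow 2).tendsto _).comp hsub.enorm

end PoissonKernel

section RegularisedSolution

open Convolution ContinuousLinearMap

variable {ι : Type*} [Fintype ι] {n : ℕ} {b : ℝ}

/-- The imaginary part of the wave kernel, normalised so that it is the solution of the wave
equation with zero initial value and with the Poisson kernel as initial velocity. -/
def poissonWaveKernel (n : ℕ) (b : ℝ) : Spacetime ι → ℝ :=
  (-(poissonConst (EuclideanSpace ℝ ι) n / (2 * n)) • Complex.imCLM) ∘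
    waveKernel b n

lemma waveKernel_zero_left (b : ℝ) (m : ℕ) (z : EuclideanSpace ℝ ι) :
    waveKernel b m (0, z) = ((((‖z‖ ^ 2 + b ^ 2) ^ m)⁻¹ : ℝ) : ℂ) := by
  have : minkowskiSq b (0, z) = ((‖z‖ ^ 2 + b ^ 2 : ℝ) : ℂ) := by
    simp [minkowskiSq, mul_pow]
  rw [waveKernel, this, inv_pow]
  norm_cast

lemma poissonWaveKernel_zero_left (n : ℕ) (b : ℝ) (z : EuclideanSpace ℝ ι) :
    poissonWaveKernel n b (0, z) = 0 := by
  simp only [poissonWaveKernel, Function.comp_apply, waveKernel_zero_left, smul_apply,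
    Complex.imCLM_apply, Complex.ofReal_im, smul_zero]

lemma spatialConv_zero_left (g : EuclideanSpace ℝ ι → ℝ) (κ : Spacetime ι → ℝ)
    (x : EuclideanSpace ℝ ι) :
    spatialConv g κ (0, x) = ((fun z => κ (0, z)) ⋆[lsmul ℝ ℝ, volume] g) x := by
  rw [convolution_lsmul_swap]
  simp [spatialConv, mul_comm]

variable [DecidableEq ι]

lemma partialDeriv_poissonWaveKernel (hb : b ≠ 0) (n : ℕ) (μ : Option ι) :
    partialDeriv μ (poissonWaveKernel n b) =
      (-(poissonConst (EuclideanSpace ℝ ι) n / (2 * n)) • Complex.imCLM) ∘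
        partialDeriv μ (waveKernel b n) :=
  partialDeriv_clm_comp _ (contDiff_waveKernel hb n) μ

lemma partialDeriv_none_poissonWaveKernel_zero_left (hb : b ≠ 0) (hn : n ≠ 0)
    (z : EuclideanSpace ℝ ι) :
    partialDeriv none (poissonWaveKernel n b) (0, z) = halfSpacePoissonKernel n b z := by
  have hn' : (n : ℝ) ≠ 0 := mod_cast hn
  rw [partialDeriv_poissonWaveKernel hb, Function.comp_apply, partialDeriv, coordDir,
    fderiv_waveKernel_apply hb, waveKernel_zero_left, halfSpacePoissonKernel]
  have hpair : minkowskiPairing b (1, 0) (0, z) = b * Complex.I := by simp [minkowskiPairing]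
  have hreal (r : ℝ) :
      -(2 * n : ℂ) * (r * (b * Complex.I)) = (-(2 * n * r * b) : ℝ) * Complex.I := by
    push_cast
    ring
  rw [hpair, hreal, smul_apply, Complex.imCLM_apply, Complex.im_ofReal_mul, Complex.I_im,
    smul_eq_mul]
  field_simp

lemma isWaveSolution_poissonWaveKernel (hb : b ≠ 0) (hι : Fintype.card ι = 2 * n + 1) :
    IsWaveSolution (poissonWaveKernel n b : Spacetime ι → ℝ) :=
  (isWaveSolution_waveKernel hb hι).clm_comp _

lemma partialDeriv_some_eq_zero {U : Spacetime ι → ℝ} (hU : ContDiff ℝ ∞ U) {t : ℝ}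
    (ht : ∀ x, U (t, x) = 0) (j : ι) (x : EuclideanSpace ℝ ι) :
    partialDeriv (some j) U (t, x) = 0 := by
  rw [partialDeriv, coordDir, ← fderiv_slice_right (hU.differentiable (by simp) _), funext ht]
  simp

lemma IsWaveSolution.partialDeriv_none_none_eq_zero {U : Spacetime ι → ℝ} (hU : IsWaveSolution U)
    {t : ℝ} (ht : ∀ x, U (t, x) = 0) (x : EuclideanSpace ℝ ι) :
    partialDeriv none (partialDeriv none U) (t, x) = 0 := by
  rw [hU.wave_eq]
  exact Finset.sum_eq_zero fun j _ =>
    partialDeriv_some_eq_zero (contDiff_partialDeriv hU.contDiff _)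
      (partialDeriv_some_eq_zero hU.contDiff ht j) j x

lemma hasConeAsymptotics_partialDeriv_poissonWaveKernel (hb : b ≠ 0) (n : ℕ) (μ : Option ι) :
    HasConeAsymptotics (-n) (-1) (partialDeriv μ (poissonWaveKernel n b)) := by
  rw [partialDeriv_poissonWaveKernel hb]
  exact (hasConeAsymptotics_fderiv_waveKernel hb n (coordDir μ)).clm_comp _

lemma hasConeAsymptotics_partialDeriv_partialDeriv_poissonWaveKernel (hb : b ≠ 0) (n : ℕ)
    (μ ν : Option ι) :
    HasConeAsymptotics (-n) (-1) (partialDeriv μ (partialDeriv ν (poissonWaveKernel n b))) := by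
  rw [partialDeriv_poissonWaveKernel hb, partialDeriv_clm_comp _
    (contDiff_partialDeriv (contDiff_waveKernel hb n) ν)]
  exact (hasConeAsymptotics_fderiv_fderiv_waveKernel hb n (coordDir ν) (coordDir μ)).clm_comp _

/-- The solution of the wave equation whose initial data are the convolutions of `u₀` and `u₁` with
the Poisson kernel. -/
def regularisedWave (n : ℕ) (b : ℝ) (u₀ u₁ : EuclideanSpace ℝ ι → ℝ) : Spacetime ι → ℝ :=
  spatialConv u₁ (poissonWaveKernel n b) +
    spatialConv u₀ (partialDeriv none (poissonWaveKernel n b))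

variable {u₀ u₁ : EuclideanSpace ℝ ι → ℝ}

lemma isWaveSolution_regularisedWave (hb : b ≠ 0) (hι : Fintype.card ι = 2 * n + 1)
    (hu₀ : Continuous u₀) (hu₀s : HasCompactSupport u₀) (hu₁ : Continuous u₁)
    (hu₁s : HasCompactSupport u₁) : IsWaveSolution (regularisedWave n b u₀ u₁) :=
  have hk := isWaveSolution_poissonWaveKernel hb hι
  (hk.spatialConv hu₁ hu₁s).add ((hk.partialDeriv none).spatialConv hu₀ hu₀s)

lemma partialDeriv_regularisedWave (hb : b ≠ 0) (hι : Fintype.card ι = 2 * n + 1)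
    (hu₀ : Continuous u₀) (hu₀s : HasCompactSupport u₀) (hu₁ : Continuous u₁)
    (hu₁s : HasCompactSupport u₁) (μ : Option ι) :
    partialDeriv μ (regularisedWave n b u₀ u₁) =
      spatialConv u₁ (partialDeriv μ (poissonWaveKernel n b)) +
        spatialConv u₀ (partialDeriv μ (partialDeriv none (poissonWaveKernel n b))) := by
  have hk := isWaveSolution_poissonWaveKernel hb hι
  rw [regularisedWave, partialDeriv_add (hk.spatialConv hu₁ hu₁s).contDiff
      ((hk.partialDeriv none).spatialConv hu₀ hu₀s).contDiff,
    partialDeriv_spatialConv hu₁ hu₁s hk.contDiff,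
    partialDeriv_spatialConv hu₀ hu₀s (hk.partialDeriv none).contDiff]

lemma hasConeAsymptotics_spacetimeGradient_regularisedWave (hb : b ≠ 0)
    (hι : Fintype.card ι = 2 * n + 1) (hu₀ : Continuous u₀) (hu₀s : HasCompactSupport u₀)
    (hu₁ : Continuous u₁) (hu₁s : HasCompactSupport u₁) :
    HasConeAsymptotics (-n) (-1) (spacetimeGradient (regularisedWave n b u₀ u₁)) := by
  refine .euclidean fun μ => ?_
  change HasConeAsymptotics _ _ (partialDeriv μ _)
  rw [partialDeriv_regularisedWave hb hι hu₀ hu₀s hu₁ hu₁s]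
  exact ((hasConeAsymptotics_partialDeriv_poissonWaveKernel hb n μ).spatialConv hu₁ hu₁s).add
    ((hasConeAsymptotics_partialDeriv_partialDeriv_poissonWaveKernel hb n μ none).spatialConv
      hu₀ hu₀s)

lemma regularisedWave_zero_left (hb : b ≠ 0) (hn : n ≠ 0) (u₀ u₁ : EuclideanSpace ℝ ι → ℝ)
    (x : EuclideanSpace ℝ ι) : regularisedWave n b u₀ u₁ (0, x) =
      (halfSpacePoissonKernel n b ⋆[lsmul ℝ ℝ, volume] u₀) x := by
  rw [regularisedWave, Pi.add_apply, spatialConv_zero_left u₀,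
    funext (partialDeriv_none_poissonWaveKernel_zero_left hb hn)]
  simp [spatialConv, poissonWaveKernel_zero_left]

lemma partialDeriv_none_regularisedWave_zero_left (hb : b ≠ 0) (hn : n ≠ 0)
    (hι : Fintype.card ι = 2 * n + 1) (hu₀ : Continuous u₀) (hu₀s : HasCompactSupport u₀)
    (hu₁ : Continuous u₁) (hu₁s : HasCompactSupport u₁) (x : EuclideanSpace ℝ ι) :
    partialDeriv none (regularisedWave n b u₀ u₁) (0, x) =
      (halfSpacePoissonKernel n b ⋆[lsmul ℝ ℝ, volume] u₁) x := by
  have hsnd := (isWaveSolution_poissonWaveKernel hb hι).partialDeriv_none_none_eq_zero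
    (poissonWaveKernel_zero_left n b)
  rw [partialDeriv_regularisedWave hb hι hu₀ hu₀s hu₁ hu₁s, Pi.add_apply,
    spatialConv_zero_left u₁, funext (partialDeriv_none_poissonWaveKernel_zero_left hb hn)]
  simp [spatialConv, hsnd]

lemma partialDeriv_some_regularisedWave_zero_left (hb : 0 < b) (hn : n ≠ 0)
    (hι : Fintype.card ι = 2 * n + 1) (hu₀ : ContDiff ℝ 1 u₀) (hu₀s : HasCompactSupport u₀)
    (hu₁ : Continuous u₁) (hu₁s : HasCompactSupport u₁) (j : ι) (x : EuclideanSpace ℝ ι) :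
    partialDeriv (some j) (regularisedWave n b u₀ u₁) (0, x) =
      (halfSpacePoissonKernel n b ⋆[lsmul ℝ ℝ, volume]
        fun y => fderiv ℝ u₀ y (EuclideanSpace.single j 1)) x := by
  have hV := isWaveSolution_regularisedWave hb.ne' hι hu₀.continuous hu₀s hu₁ hu₁s
  have hP : LocallyIntegrable (halfSpacePoissonKernel n b : EuclideanSpace ℝ ι → ℝ) :=
    (continuous_halfSpacePoissonKernel n hb.ne').locallyIntegrable
  rw [partialDeriv, coordDir, ← fderiv_slice_right (hV.contDiff.differentiable (by simp) _),
    funext (regularisedWave_zero_left hb.ne' hn u₀ u₁),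
    (hu₀s.hasFDerivAt_convolution_right (lsmul ℝ ℝ) hP hu₀ x).fderiv,
    convolution_precompR_apply _ hP (hu₀s.fderiv ℝ) (hu₀.continuous_fderiv (by simp))]

lemma convolution_euclideanSpace_apply {J : Type*} [Fintype J] {E : Type*} [NormedAddCommGroup E]
    [MeasureSpace E] [BorelSpace E] {f : E → ℝ}
    (hf : LocallyIntegrable f) {g : E → EuclideanSpace ℝ J} (hg : Continuous g)
    (hgs : HasCompactSupport g) (x : E) (j : J) :
    (f ⋆[lsmul ℝ ℝ, volume] g) x j = (f ⋆[lsmul ℝ ℝ, volume] fun y => g y j) x := by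
  have hint := hgs.convolutionExists_right (lsmul ℝ ℝ) hf hg x
  exact ((EuclideanSpace.proj j).integral_comp_comm hint).symm

lemma hasCompactSupport_spacetimeGradient {U : Spacetime ι → ℝ} (hU : ContDiff ℝ ∞ U) {t : ℝ}
    (hU₀ : HasCompactSupport fun x => U (t, x))
    (hU₁ : HasCompactSupport fun x => partialDeriv none U (t, x)) :
    HasCompactSupport fun x => spacetimeGradient U (t, x) := by
  refine HasCompactSupport.intro (hU₀.union hU₁) fun x hx => ?_
  rw [mem_union, not_or] at hx
  ext μ
  cases μ with
  | none => exact image_eq_zero_of_notMem_tsupport (f := fun x => partialDeriv none U (t, x)) hx.2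
  | some j =>
    change fderiv ℝ U (t, x) (0, _) = 0
    rw [← fderiv_slice_right (hU.differentiable (by simp) _),
      fderiv_of_notMem_tsupport (𝕜 := ℝ) hx.1]
    rfl

lemma spacetimeGradient_regularisedWave_zero_left {U : Spacetime ι → ℝ} (hU : ContDiff ℝ ∞ U)
    (hU₀ : HasCompactSupport fun x => U (0, x))
    (hU₁ : HasCompactSupport fun x => partialDeriv none U (0, x))
    (hb : 0 < b) (hn : n ≠ 0) (hι : Fintype.card ι = 2 * n + 1) (x : EuclideanSpace ℝ ι) :
    spacetimeGradient (regularisedWave n b (fun y => U (0, y))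
        fun y => partialDeriv none U (0, y)) (0, x) =
      (halfSpacePoissonKernel n b ⋆[lsmul ℝ ℝ, volume]
        fun y => spacetimeGradient U (0, y)) x := by
  have hu₀ : ContDiff ℝ 1 fun y => U (0, y) :=
    (hU.comp (contDiff_prodMk_right 0)).of_le (mod_cast le_top)
  have hu₁ : Continuous fun y => partialDeriv none U (0, y) :=
    (contDiff_partialDeriv hU none).continuous.comp (by fun_prop)
  have hP : LocallyIntegrable (halfSpacePoissonKernel n b : EuclideanSpace ℝ ι → ℝ) :=
    (continuous_halfSpacePoissonKernel n hb.ne').locallyIntegrable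
  have hG : Continuous fun y => spacetimeGradient U (0, y) :=
    (contDiff_spacetimeGradient hU).continuous.comp (by fun_prop)
  ext μ
  rw [convolution_euclideanSpace_apply hP hG
    (hasCompactSupport_spacetimeGradient hU hU₀ hU₁)]
  cases μ with
  | none =>
    exact partialDeriv_none_regularisedWave_zero_left hb.ne' hn hι hu₀.continuous hU₀ hu₁ hU₁ x
  | some j =>
    refine (partialDeriv_some_regularisedWave_zero_left hb hn hι hu₀ hU₀ hu₁ hU₁ j x).trans ?_
    simp only [fderiv_slice_right (hU.differentiable (by simp) _)]
    rfl

end RegularisedSolution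

section EnergyNorm

variable {α F : Type*} [MeasurableSpace α] {μ : Measure α} [NormedAddCommGroup F]

lemma eLpNorm_two_sq (f : α → F) (μ : Measure α) :
    eLpNorm f 2 μ ^ 2 = ∫⁻ x, ‖f x‖ₑ ^ 2 ∂μ := by
  simpa using eLpNorm_nnreal_pow_eq_lintegral (f := f) (μ := μ) (p := 2) two_ne_zero

lemma lpNorm_two_sq_eq_toReal_lintegral {f : α → F} (hf : AEStronglyMeasurable f μ) :
    lpNorm f 2 μ ^ 2 = (∫⁻ x, ‖f x‖ₑ ^ 2 ∂μ).toReal := by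
  rw [← toReal_eLpNorm hf, ← ENNReal.toReal_pow, eLpNorm_two_sq]

lemma lpNorm_two_sq_eq_integral {f : α → F} (hf : AEStronglyMeasurable f μ) :
    lpNorm f 2 μ ^ 2 = ∫ x, ‖f x‖ ^ 2 ∂μ := by
  rw [lpNorm_two_sq_eq_toReal_lintegral hf, integral_eq_lintegral_of_nonneg_ae
    (.of_forall fun x => sq_nonneg ‖f x‖) (by fun_prop)]
  simp only [ENNReal.ofReal_pow (norm_nonneg _), ofReal_norm]

lemma abs_lpNorm_sub_lpNorm_le {f g : α → F} {p : ENNReal} (hf : MemLp f p μ) (hg : MemLp g p μ)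
    (hp : 1 ≤ p) : |lpNorm f p μ - lpNorm g p μ| ≤ lpNorm (f - g) p μ := by
  have hfg := lpNorm_le_lpNorm_add_lpNorm_sub' (f := f) hg hp
  have hgf := lpNorm_le_lpNorm_add_lpNorm_sub (f := g) hf hp
  rw [abs_le]
  constructor <;> linarith

lemma lpNorm_restrict_le {f : α → F} {p : ENNReal} (hf : MemLp f p μ) (s : Set α) :
    lpNorm f p (μ.restrict s) ≤ lpNorm f p μ := by
  rw [← toReal_eLpNorm hf.aestronglyMeasurable, ← toReal_eLpNorm hf.aestronglyMeasurable.restrict]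
  exact ENNReal.toReal_mono hf.eLpNorm_ne_top (eLpNorm_restrict_le f p μ s)

lemma exists_tendsto_of_tendstoUniformly {κ β E : Type*} [PseudoMetricSpace E] [CompleteSpace E]
    {p : Filter κ} [p.NeBot] {l : Filter β} [l.NeBot] {g : κ → β → E} {f : β → E} {A : κ → E}
    (hgf : TendstoUniformly g f p) (hg : ∀ᶠ k in p, Tendsto (g k) l (𝓝 (A k))) :
    ∃ a, Tendsto f l (𝓝 a) ∧ Tendsto A p (𝓝 a) := by
  rw [Metric.tendstoUniformly_iff] at hgf
  have hcauchy : Cauchy (map f l) := by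
    refine Metric.cauchy_iff.2 ⟨inferInstance, fun ε hε => ?_⟩
    obtain ⟨k, hfk, hgk⟩ := ((hgf (ε / 4) (by positivity)).and hg).exists
    refine ⟨f '' {t | dist (g k t) (A k) < ε / 4},
      image_mem_map (Metric.tendsto_nhds.1 hgk (ε / 4) (by positivity)), ?_⟩
    have near : ∀ t ∈ {t | dist (g k t) (A k) < ε / 4}, dist (f t) (A k) < ε / 2 := fun t ht => by
      have := dist_triangle (f t) (g k t) (A k)
      linarith [hfk t, mem_ofPred_eq ▸ ht]
    rintro _ ⟨s, hs, rfl⟩ _ ⟨t, ht, rfl⟩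
    linarith [dist_triangle_right (f s) (f t) (A k), near s hs, near t ht]
  obtain ⟨a, ha⟩ := cauchy_map_iff_exists_tendsto.1 hcauchy
  refine ⟨a, ha, Metric.tendsto_nhds.2 fun ε hε => ?_⟩
  filter_upwards [hgf (ε / 2) (by positivity), hg] with k hfk hgk
  rw [dist_comm]
  exact (le_of_tendsto' (ha.dist hgk) fun t => (hfk t).le).trans_lt (by linarith)

end EnergyNorm

section ExteriorEnergy

open Convolution ContinuousLinearMap

variable {ι : Type*} [Fintype ι] [DecidableEq ι] {n : ℕ} {U V : Spacetime ι → ℝ}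

/-- The norm `(∫_{‖x‖ ≥ |t|} (|∇_x U|² + (∂_t U)²) dx)^{1/2}`, i.e. the square root of twice the
energy of `U` outside the light cone. -/
def exteriorNorm (U : Spacetime ι → ℝ) (t : ℝ) : ℝ :=
  lpNorm (fun x => spacetimeGradient U (t, x)) 2 (volume.restrict {x | |t| ≤ ‖x‖})

lemma continuous_spacetimeGradient_slice (hU : ContDiff ℝ ∞ U) (t : ℝ) :
    Continuous fun x => spacetimeGradient U (t, x) :=
  (contDiff_spacetimeGradient hU).continuous.comp (Continuous.prodMk_right t)

lemma exteriorNorm_sq (hU : ContDiff ℝ ∞ U) (t : ℝ) :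
    exteriorNorm U t ^ 2 = ∫ x in {x | |t| ≤ ‖x‖}, ‖spacetimeGradient U (t, x)‖ ^ 2 :=
  lpNorm_two_sq_eq_integral (continuous_spacetimeGradient_slice hU t).aestronglyMeasurable

lemma spacetimeGradient_sub (hU : ContDiff ℝ ∞ U) (hV : ContDiff ℝ ∞ V) :
    spacetimeGradient (U - V) = spacetimeGradient U - spacetimeGradient V := by
  have hUV : ContDiff ℝ ∞ (U - V) := hU.sub hV
  rw [eq_sub_iff_add_eq, ← spacetimeGradient_add hUV hV, sub_add_cancel]

namespace IsWaveSolution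

lemma eLpNorm_spacetimeGradient_eq (hU : IsWaveSolution U) (s t : ℝ) :
    eLpNorm (fun x => spacetimeGradient U (s, x)) 2 volume =
      eLpNorm (fun x => spacetimeGradient U (t, x)) 2 volume := by
  rw [← ENNReal.pow_right_strictMono two_ne_zero |>.injective.eq_iff, eLpNorm_two_sq,
    eLpNorm_two_sq, hU.lintegral_energy_eq s t]

lemma memLp_spacetimeGradient (hU : IsWaveSolution U) {s : ℝ}
    (hs : MemLp (fun x => spacetimeGradient U (s, x)) 2) (t : ℝ) :
    MemLp (fun x => spacetimeGradient U (t, x)) 2 :=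
  ⟨(continuous_spacetimeGradient_slice hU.contDiff t).aestronglyMeasurable,
    hU.eLpNorm_spacetimeGradient_eq s t ▸ hs.eLpNorm_lt_top⟩

lemma abs_exteriorNorm_sub_le (hU : IsWaveSolution U) (hV : IsWaveSolution V)
    {s : ℝ} (hUs : MemLp (fun x => spacetimeGradient U (s, x)) 2)
    (hVs : MemLp (fun x => spacetimeGradient V (s, x)) 2) (t : ℝ) :
    |exteriorNorm U t - exteriorNorm V t| ≤
      lpNorm ((fun x => spacetimeGradient U (s, x)) - fun x => spacetimeGradient V (s, x)) 2
        volume := by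
  have hUt := hU.memLp_spacetimeGradient hUs t
  have hVt := hV.memLp_spacetimeGradient hVs t
  have conserved := (hU.sub hV).eLpNorm_spacetimeGradient_eq t s
  rw [spacetimeGradient_sub hU.contDiff hV.contDiff] at conserved
  calc |exteriorNorm U t - exteriorNorm V t|
    _ ≤ _ := abs_lpNorm_sub_lpNorm_le (hUt.restrict _) (hVt.restrict _) one_le_two
    _ ≤ _ := lpNorm_restrict_le (hUt.sub hVt) _
    _ = _ := by
      rw [← toReal_eLpNorm (hUt.sub hVt).aestronglyMeasurable,
        ← toReal_eLpNorm (hUs.sub hVs).aestronglyMeasurable]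
      exact congrArg ENNReal.toReal conserved

lemma exists_tendsto_exteriorNorm_of_hasConeAsymptotics [Nonempty ι] (hV : IsWaveSolution V)
    (hcone : HasConeAsymptotics (-n) (-1) (spacetimeGradient V))
    (hι : Fintype.card ι = 2 * n + 1) {s : ℝ}
    (hs : MemLp (fun x => spacetimeGradient V (s, x)) 2) :
    ∃ a b : ℝ, Tendsto (exteriorNorm V) atTop (𝓝 a) ∧ Tendsto (exteriorNorm V) atBot (𝓝 b) ∧
      a ^ 2 + b ^ 2 = lpNorm (fun x => spacetimeGradient V (s, x)) 2 volume ^ 2 := by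
  obtain ⟨A, B, hA, hB, hAB⟩ := hcone.exists_tendsto_setLIntegral_exterior (μ := volume)
    (finrank_euclideanSpace.trans hι)
  have total : ∫⁻ x, ‖spacetimeGradient V (s, x)‖ₑ ^ 2 = A + B := by
    refine tendsto_nhds_unique (tendsto_const_nhds.congr fun w => ?_) hAB
    exact hV.lintegral_energy_eq s w
  have hfin : A + B ≠ ⊤ := by
    rw [← total, ← eLpNorm_two_sq]
    exact ENNReal.pow_ne_top hs.eLpNorm_ne_top
  obtain ⟨hAfin, hBfin⟩ := ENNReal.add_ne_top.1 hfin
  have to_exteriorNorm {l : Filter ℝ} {C : ENNReal} (hC : C ≠ ⊤) (hlim : Tendsto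
      (fun w => ∫⁻ x in {x | |w| ≤ ‖x‖}, ‖spacetimeGradient V (w, x)‖ₑ ^ 2) l (𝓝 C)) :
      Tendsto (exteriorNorm V) l (𝓝 √C.toReal) := by
    refine ((ENNReal.tendsto_toReal hC).comp hlim).sqrt.congr fun w => ?_
    rw [Function.comp_apply, ← lpNorm_two_sq_eq_toReal_lintegral
      (continuous_spacetimeGradient_slice hV.contDiff w).aestronglyMeasurable]
    exact Real.sqrt_sq lpNorm_nonneg
  refine ⟨_, _, to_exteriorNorm hAfin hA, to_exteriorNorm hBfin hB, ?_⟩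
  rw [Real.sq_sqrt ENNReal.toReal_nonneg, Real.sq_sqrt ENNReal.toReal_nonneg,
    ← ENNReal.toReal_add hAfin hBfin, ← total,
    lpNorm_two_sq_eq_toReal_lintegral hs.aestronglyMeasurable]

lemma exists_tendsto_exteriorNorm_of_approx [Nonempty ι] (hU : IsWaveSolution U)
    (hι : Fintype.card ι = 2 * n + 1) {s : ℝ}
    (hs : MemLp (fun x => spacetimeGradient U (s, x)) 2) {κ : Type*} {p : Filter κ} [p.NeBot]
    {V : κ → Spacetime ι → ℝ} (hV : ∀ᶠ k in p, IsWaveSolution (V k))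
    (hcone : ∀ᶠ k in p, HasConeAsymptotics (-n) (-1) (spacetimeGradient (V k)))
    (hlim : Tendsto (fun k => eLpNorm ((fun x => spacetimeGradient U (s, x)) -
      fun x => spacetimeGradient (V k) (s, x)) 2 volume) p (𝓝 0)) :
    ∃ a b : ℝ, Tendsto (exteriorNorm U) atTop (𝓝 a) ∧ Tendsto (exteriorNorm U) atBot (𝓝 b) ∧
      a ^ 2 + b ^ 2 = lpNorm (fun x => spacetimeGradient U (s, x)) 2 volume ^ 2 := by
  have hVs : ∀ᶠ k in p, MemLp (fun x => spacetimeGradient (V k) (s, x)) 2 := by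
    filter_upwards [hV, hlim.eventually_lt_const ENNReal.zero_lt_top] with k hk hfin
    have hcont := continuous_spacetimeGradient_slice hk.contDiff s
    have hdiff := hs.aestronglyMeasurable.sub hcont.aestronglyMeasurable
    simpa only [sub_sub_cancel] using hs.sub ⟨hdiff, hfin⟩
  have small (ε : ℝ) (hε : 0 < ε) : ∀ᶠ k in p, lpNorm ((fun x => spacetimeGradient U (s, x)) -
      fun x => spacetimeGradient (V k) (s, x)) 2 volume < ε := by
    filter_upwards [hVs, hlim.eventually_lt_const (ENNReal.ofReal_pos.2 hε)] with k hk hkε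
    rw [← toReal_eLpNorm (hs.sub hk).aestronglyMeasurable]
    exact ENNReal.toReal_lt_of_lt_ofReal hkε
  have uniform : TendstoUniformly (fun k => exteriorNorm (V k)) (exteriorNorm U) p :=
    Metric.tendstoUniformly_iff.2 fun ε hε => by
      filter_upwards [hV, hVs, small ε hε] with k hk hks hkε t
      exact (hU.abs_exteriorNorm_sub_le hk hs hks t).trans_lt hkε
  have total : Tendsto (fun k => lpNorm (fun x => spacetimeGradient (V k) (s, x)) 2 volume) p
      (𝓝 (lpNorm (fun x => spacetimeGradient U (s, x)) 2 volume)) :=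
    Metric.tendsto_nhds.2 fun ε hε => by
      filter_upwards [hVs, small ε hε] with k hks hkε
      rw [dist_comm]
      exact (abs_lpNorm_sub_lpNorm_le hs hks one_le_two).trans_lt hkε
  obtain ⟨A, hA⟩ := (hV.and (hcone.and hVs)).mono (fun k ⟨hk, hkc, hks⟩ =>
    hk.exists_tendsto_exteriorNorm_of_hasConeAsymptotics hkc hι hks) |>.choice
  obtain ⟨B, hAB⟩ := hA.choice
  obtain ⟨a, ha, hAa⟩ := exists_tendsto_of_tendstoUniformly uniform (hAB.mono fun k h => h.1)
  obtain ⟨b, hb, hBb⟩ := exists_tendsto_of_tendstoUniformly uniform (hAB.mono fun k h => h.2.1)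
  exact ⟨a, b, ha, hb, tendsto_nhds_unique
    (((hAa.pow 2).add (hBb.pow 2)).congr' (hAB.mono fun k h => h.2.2)) (total.pow 2)⟩

end IsWaveSolution

lemma tendsto_eLpNorm_spacetimeGradient_sub_regularisedWave (hU : ContDiff ℝ ∞ U)
    (hU₀ : HasCompactSupport fun x => U (0, x))
    (hU₁ : HasCompactSupport fun x => partialDeriv none U (0, x))
    (hn : n ≠ 0) (hι : Fintype.card ι = 2 * n + 1) :
    Tendsto (fun b => eLpNorm ((fun x => spacetimeGradient U (0, x)) - fun x => spacetimeGradient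
      (regularisedWave n b (fun y => U (0, y)) fun y => partialDeriv none U (0, y)) (0, x))
        2 volume) (𝓝[>] 0) (𝓝 0) := by
  have hsq : Tendsto (fun b => eLpNorm ((fun x => spacetimeGradient U (0, x)) -
      halfSpacePoissonKernel n b ⋆[lsmul ℝ ℝ, volume] fun x => spacetimeGradient U (0, x)) 2
        volume ^ 2) (𝓝[>] 0) (𝓝 0) := by
    simp only [eLpNorm_two_sq]
    exact tendsto_lintegral_enorm_sub_convolution_halfSpacePoissonKernel_sq
      (finrank_euclideanSpace.trans hι) (continuous_spacetimeGradient_slice hU 0)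
      (hasCompactSupport_spacetimeGradient hU hU₀ hU₁)
  have hsqrt := (ENNReal.continuous_rpow_const (y := 2⁻¹)).tendsto 0 |>.comp hsq
  rw [ENNReal.zero_rpow_of_pos (by positivity)] at hsqrt
  refine hsqrt.congr' ?_
  filter_upwards [self_mem_nhdsWithin] with b hb
  rw [funext (spacetimeGradient_regularisedWave_zero_left hU hU₀ hU₁ hb hn hι)]
  exact ENNReal.pow_rpow_inv_natCast two_ne_zero _

theorem IsWaveSolution.exists_tendsto_exteriorNorm (hU : IsWaveSolution U)
    (hU₀ : HasCompactSupport fun x => U (0, x))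
    (hU₁ : HasCompactSupport fun x => partialDeriv none U (0, x))
    (hn : n ≠ 0) (hι : Fintype.card ι = 2 * n + 1) :
    ∃ a b : ℝ, Tendsto (exteriorNorm U) atTop (𝓝 a) ∧ Tendsto (exteriorNorm U) atBot (𝓝 b) ∧
      a ^ 2 + b ^ 2 = ∫ x, ‖spacetimeGradient U (0, x)‖ ^ 2 := by
  have : Nonempty ι := Fintype.card_pos_iff.1 (by omega)
  have hgrad := continuous_spacetimeGradient_slice hU.contDiff 0
  have hu₀ : Continuous fun x => U (0, x) := hU.contDiff.continuous.comp (by fun_prop)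
  have hu₁ : Continuous fun x => partialDeriv none U (0, x) :=
    (contDiff_partialDeriv hU.contDiff none).continuous.comp (by fun_prop)
  have hpos : ∀ᶠ b : ℝ in 𝓝[>] 0, b ≠ 0 := by
    filter_upwards [self_mem_nhdsWithin] with b hb using ne_of_gt hb
  rw [← lpNorm_two_sq_eq_integral hgrad.aestronglyMeasurable]
  exact hU.exists_tendsto_exteriorNorm_of_approx hι
    (hgrad.memLp_of_hasCompactSupport
      (hasCompactSupport_spacetimeGradient hU.contDiff hU₀ hU₁))
    (hpos.mono fun b hb => isWaveSolution_regularisedWave hb hι hu₀ hU₀ hu₁ hU₁)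
    (hpos.mono fun b hb =>
      hasConeAsymptotics_spacetimeGradient_regularisedWave hb hι hu₀ hU₀ hu₁ hU₁)
    (tendsto_eLpNorm_spacetimeGradient_sub_regularisedWave hU.contDiff hU₀ hU₁ hn hι)

end ExteriorEnergy

section SpatialGradient

lemma integrable_sq_of_hasCompactSupport {X F : Type*} [TopologicalSpace X] [MeasurableSpace X]
    [OpensMeasurableSpace X] [NormedAddCommGroup F] [SecondCountableTopologyEither X F]
    {μ : Measure X} [IsFiniteMeasureOnCompacts μ] {f : X → F} (hf : Continuous f)
    (hfs : HasCompactSupport f) : Integrable (fun x => ‖f x‖ ^ 2) μ :=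
  (hf.memLp_of_hasCompactSupport hfs).integrable_norm_pow two_ne_zero

lemma integrable_norm_gradient_sq {E : Type*} [NormedAddCommGroup E] [InnerProductSpace ℝ E]
    [CompleteSpace E] [SecondCountableTopology E] [MeasurableSpace E] [OpensMeasurableSpace E]
    {μ : Measure E} [IsFiniteMeasureOnCompacts μ] {f : E → ℝ} (hf : ContDiff ℝ 1 f)
    (hfs : HasCompactSupport f) : Integrable (fun x => ‖gradient f x‖ ^ 2) μ :=
  integrable_sq_of_hasCompactSupport
    ((InnerProductSpace.toDual ℝ E).symm.continuous.comp (hf.continuous_fderiv one_ne_zero))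
    ((hfs.fderiv ℝ).comp_left (map_zero (InnerProductSpace.toDual ℝ E).symm))

lemma norm_gradient_sq {ι : Type*} [Fintype ι] [DecidableEq ι] (f : EuclideanSpace ℝ ι → ℝ)
    (x : EuclideanSpace ℝ ι) :
    ‖gradient f x‖ ^ 2 = ∑ j, fderiv ℝ f x (EuclideanSpace.single j 1) ^ 2 := by
  rw [EuclideanSpace.real_norm_sq_eq]
  refine Finset.sum_congr rfl fun j _ => ?_
  rw [← InnerProductSpace.toDual_symm_apply, EuclideanSpace.inner_single_right]
  simp [gradient]

end SpatialGradient

section Uncurry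

variable {ι F : Type*} [Fintype ι] [DecidableEq ι] [NormedAddCommGroup F] [NormedSpace ℝ F]
  {u : ℝ → EuclideanSpace ℝ ι → F}

lemma deriv_eq_partialDeriv_uncurry (hu : Differentiable ℝ (Function.uncurry u)) (t : ℝ)
    (x : EuclideanSpace ℝ ι) :
    deriv (fun s => u s x) t = partialDeriv none (Function.uncurry u) (t, x) :=
  (hasDerivAt_slice_left (hu (t, x))).deriv

lemma fderiv_single_eq_partialDeriv_uncurry (hu : Differentiable ℝ (Function.uncurry u)) (t : ℝ)
    (x : EuclideanSpace ℝ ι) (j : ι) :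
    fderiv ℝ (u t) x (EuclideanSpace.single j 1) =
      partialDeriv (some j) (Function.uncurry u) (t, x) :=
  fderiv_slice_right (hu (t, x)) _

lemma norm_gradient_sq_add_deriv_sq {u : ℝ → EuclideanSpace ℝ ι → ℝ}
    (hu : Differentiable ℝ (Function.uncurry u)) (t : ℝ) (x : EuclideanSpace ℝ ι) :
    ‖gradient (u t) x‖ ^ 2 + deriv (fun s => u s x) t ^ 2 =
      ‖spacetimeGradient (Function.uncurry u) (t, x)‖ ^ 2 := by
  simp only [norm_gradient_sq, norm_sq_spacetimeGradient, Fintype.sum_option,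
    deriv_eq_partialDeriv_uncurry hu, fderiv_single_eq_partialDeriv_uncurry hu, add_comm]

lemma isWaveSolution_uncurry {N : ℕ} {u : ℝ → EuclideanSpace ℝ (Fin N) → ℝ}
    (hu : ContDiff ℝ ∞ (Function.uncurry u))
    (hwave : ∀ t x, deriv (fun s => deriv (fun r => u r x) s) t = ∑ j, d2 (u t) j x) :
    IsWaveSolution (Function.uncurry u) where
  contDiff := hu
  wave_eq := fun (t, x) => by
    have hd := hu.differentiable (by simp)
    have hd' (μ : Option (Fin N)) : Differentiable ℝ
        (Function.uncurry fun s y => partialDeriv μ (Function.uncurry u) (s, y)) :=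
      (contDiff_partialDeriv hu μ).differentiable (by simp)
    have h := hwave t x
    simp only [d2, deriv_eq_partialDeriv_uncurry hd, fderiv_single_eq_partialDeriv_uncurry hd,
      deriv_eq_partialDeriv_uncurry (hd' _),
      fderiv_single_eq_partialDeriv_uncurry (hd' _)] at h
    exact h

end Uncurry

end WaveExteriorEnergy

/-- Proposition 2.7 (smooth compactly supported data): the exterior energies at `±∞`
exist and add up to the total energy of the data. -/
theorem stmt11 (N : ℕ) (hN : 3 ≤ N) (hodd : Odd N)
    (u₀ u₁ : EuclideanSpace ℝ (Fin N) → ℝ)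
    (hu₀ : ContDiff ℝ (⊤ : ℕ∞) u₀) (hu₀s : HasCompactSupport u₀)
    (hu₁ : ContDiff ℝ (⊤ : ℕ∞) u₁) (hu₁s : HasCompactSupport u₁)
    (u : ℝ → EuclideanSpace ℝ (Fin N) → ℝ)
    (hu : ContDiff ℝ (⊤ : ℕ∞) (fun p : ℝ × EuclideanSpace ℝ (Fin N) => u p.1 p.2))
    (hwave : ∀ t x, deriv (fun s => deriv (fun r => u r x) s) t = ∑ j, d2 (u t) j x)
    (hinit0 : ∀ x, u 0 x = u₀ x)
    (hinit1 : ∀ x, deriv (fun s => u s x) 0 = u₁ x) :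
    ∃ Eplus Eminus : ℝ,
      Tendsto (fun t : ℝ =>
          (1 / 2) * ∫ x in {x : EuclideanSpace ℝ (Fin N) | |t| ≤ ‖x‖},
            (‖gradient (u t) x‖ ^ 2 + (deriv (fun s => u s x) t) ^ 2))
        atTop (nhds Eplus)
      ∧ Tendsto (fun t : ℝ =>
          (1 / 2) * ∫ x in {x : EuclideanSpace ℝ (Fin N) | |t| ≤ ‖x‖},
            (‖gradient (u t) x‖ ^ 2 + (deriv (fun s => u s x) t) ^ 2))
        atBot (nhds Eminus)
      ∧ Eplus + Eminus
          = (1 / 2) * (∫ x, ‖gradient u₀ x‖ ^ 2) + (1 / 2) * (∫ x, u₁ x ^ 2) := by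
  obtain ⟨n, hn⟩ := hodd
  have hU : IsWaveSolution (Function.uncurry u) := isWaveSolution_uncurry hu hwave
  have hUd : Differentiable ℝ (Function.uncurry u) := hu.differentiable (by simp)
  obtain rfl : u 0 = u₀ := funext hinit0
  obtain rfl : (fun x => partialDeriv none (Function.uncurry u) (0, x)) = u₁ :=
    funext fun x => by rw [← deriv_eq_partialDeriv_uncurry hUd, hinit1]
  obtain ⟨a, b, ha, hb, hab⟩ :=
    hU.exists_tendsto_exteriorNorm hu₀s hu₁s (n := n) (by omega) (by rw [Fintype.card_fin, hn])
  have total : ∫ x, ‖spacetimeGradient (Function.uncurry u) (0, x)‖ ^ 2 =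
      (∫ x, ‖gradient (u 0) x‖ ^ 2) + ∫ x, partialDeriv none (Function.uncurry u) (0, x) ^ 2 := by
    rw [← integral_add (integrable_norm_gradient_sq (hu₀.of_le (mod_cast le_top)) hu₀s)
      (by simpa using integrable_sq_of_hasCompactSupport hu₁.continuous hu₁s)]
    simp only [← norm_gradient_sq_add_deriv_sq hUd, hinit1]
  simp only [norm_gradient_sq_add_deriv_sq hUd, ← exteriorNorm_sq hU.contDiff]
  refine ⟨_, _, (ha.pow 2).const_mul _, (hb.pow 2).const_mul _, ?_⟩
  rw [← mul_add, ← mul_add, hab, total]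

end
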